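/- arXiv:1703.01830 — 9 statements merged into one kernel-verified Lean document; each statement's English description precedes it below -/
import Mathlib

section
/- For every y ∈ 𝒫 with Ay ≠ s* one has d(y, E) ≤ (n√r / 2) · d(y, 𝒜'); in the notation of the paper, κ(y) ≤ n√r / 2 for every y ∈ 𝒫 \ E. -/
open Finset

/-- A set function `g` on subsets of `V` is submodular. -/
def Submodular {V : Type*} [DecidableEq V] (g : Finset V → ℝ) : Prop :=
  ∀ X Y : Finset V, g X + g Y ≥ g (X ∪ Y) + g (X ∩ Y)

/-- `x` belongs to the base polytope `B(g)` of the set function `g`. -/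
def InBasePolytope {V : Type*} [Fintype V] (g : Finset V → ℝ) (x : V → ℝ) : Prop :=
  (∀ S : Finset V, ∑ v ∈ S, x v ≤ g S) ∧ (∑ v, x v = g Finset.univ)

/-- Euclidean norm of a finitely indexed real vector. -/
noncomputable def norm2 {ι : Type*} [Fintype ι] (x : ι → ℝ) : ℝ :=
  Real.sqrt (∑ i, x i ^ 2)

/-- Euclidean distance from a point to a set of vectors. -/
noncomputable def distSet {ι : Type*} [Fintype ι] (y : ι → ℝ) (K : Set (ι → ℝ)) : ℝ :=
  sInf ((fun z => norm2 (y - z)) '' K)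

namespace KB

lemma gauss_aux (n k : ℕ) :
    ∑ j ∈ range (k+1), ((n:ℝ) - j) = (k+1) * (2*n - k) / 2 := by
  induction k with
  | zero => simp
  | succ k ih => rw [sum_range_succ, ih]; push_cast; ring

lemma tele_sq (G : ℕ → ℝ) (n j : ℕ) (h : j ≤ n) :
    (G n - G j)^2 ≤ ((n:ℝ) - j) * ∑ k ∈ Ico j n, (G (k+1) - G k)^2 := by
  have h1 : G n - G j = ∑ k ∈ Ico j n, (G (k+1) - G k) := (Finset.sum_Ico_sub G h).symm
  rw [h1]
  have h2 := sq_sum_le_card_mul_sum_sq (s := Ico j n) (f := fun k => G (k+1) - G k)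
  simpa [Nat.cast_sub h] using h2

lemma row_aux (G : ℕ → ℝ) (n : ℕ) :
    ∑ j ∈ range n, (G n - G j)^2 ≤
      ∑ k ∈ range n, ((k:ℝ)+1) * (2*n - k) / 2 * (G (k+1) - G k)^2 := by
  calc ∑ j ∈ range n, (G n - G j)^2
      ≤ ∑ j ∈ range n, ∑ k ∈ Ico j n, ((n:ℝ) - j) * (G (k+1) - G k)^2 := by
        apply sum_le_sum
        intro j hj
        rw [← mul_sum]
        exact tele_sq G n j (mem_range.1 hj).le
    _ = ∑ k ∈ range n, ∑ j ∈ range (k+1), ((n:ℝ) - j) * (G (k+1) - G k)^2 := by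
        apply sum_comm'
        intro x y
        simp only [mem_range, mem_Ico]
        omega
    _ = _ := by
        apply sum_congr rfl
        intro k _
        rw [← sum_mul, gauss_aux]

lemma pair_le (G : ℕ → ℝ) (n : ℕ) :
    ∑ i ∈ range n, ∑ j ∈ range i, (G i - G j)^2 ≤
      (n:ℝ) / 2 * ∑ k ∈ range n, ((k:ℝ)+1) * (n - (k+1)) * (G (k+1) - G k)^2 := by
  induction n with
  | zero => simp
  | succ n ih =>
    rw [sum_range_succ]
    refine (add_le_add ih (row_aux G n)).trans (le_of_eq ?_)
    rw [sum_range_succ, mul_sum, mul_add, mul_sum, ← sum_add_distrib]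
    have : ((n+1:ℕ):ℝ) / 2 * (((n:ℝ)+1) * (((n+1:ℕ):ℝ) - (n+1)) * (G (n+1) - G n)^2) = 0 := by
      push_cast; ring
    rw [this, add_zero]
    apply sum_congr rfl
    intro k _
    push_cast
    ring

lemma pair_eq (G : ℕ → ℝ) (n : ℕ) :
    ∑ i ∈ range n, ∑ j ∈ range i, (G i - G j)^2 =
      n * ∑ i ∈ range n, G i ^ 2 - (∑ i ∈ range n, G i)^2 := by
  induction n with
  | zero => simp
  | succ n ih =>
    rw [sum_range_succ, ih, sum_range_succ, sum_range_succ]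
    have : ∑ j ∈ range n, (G n - G j)^2
        = n * G n ^ 2 - 2 * G n * ∑ j ∈ range n, G j + ∑ j ∈ range n, G j ^ 2 := by
      simp only [sub_sq, sum_add_distrib, sum_sub_distrib, mul_sum]
      simp
    rw [this]; push_cast; ring

lemma wirt (G : ℕ → ℝ) (m : ℕ) (h : ∑ i ∈ range (m+1), G i = 0) :
    ∑ i ∈ range (m+1), G i ^ 2 ≤
      ((m:ℝ)+1)^2 / 8 * ∑ k ∈ range m, (G (k+1) - G k)^2 := by
  have h1 := pair_le G (m+1)
  rw [pair_eq, h] at h1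
  rw [sum_range_succ (fun k : ℕ => ((k:ℝ)+1) * (((m+1:ℕ):ℝ) - (k+1)) * (G (k+1) - G k)^2)] at h1
  have h2 : ∑ k ∈ range m, ((k:ℝ)+1) * (((m+1:ℕ):ℝ) - (k+1)) * (G (k+1) - G k)^2
      ≤ ∑ k ∈ range m, ((m:ℝ)+1)^2/4 * (G (k+1) - G k)^2 := by
    apply sum_le_sum
    intro k _
    apply mul_le_mul_of_nonneg_right _ (sq_nonneg _)
    push_cast
    nlinarith [sq_nonneg ((m:ℝ)+1 - 2*(k+1))]
  rw [← mul_sum] at h2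
  push_cast at h1 h2
  have hm : (0:ℝ) < (m:ℝ)+1 := by positivity
  have h3 : ((m:ℝ)+1) * ∑ i ∈ range (m+1), G i ^ 2 ≤
     ((m:ℝ)+1) * (((m:ℝ)+1)^2 / 8 * ∑ k ∈ range m, (G (k+1) - G k)^2) := by
    have h4 := mul_le_mul_of_nonneg_left h2 (by positivity : (0:ℝ) ≤ ((m:ℝ)+1)/2)
    nlinarith
  exact le_of_mul_le_mul_left h3 hm

lemma sum_sq_le (G : ℕ → ℝ) (hG : Monotone G) (m : ℕ) :
    ∑ k ∈ range m, (G (k+1) - G k)^2 ≤ (G m - G 0)^2 := by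
  induction m with
  | zero => simp
  | succ m ih =>
    rw [sum_range_succ]
    have h1 := hG (Nat.zero_le m)
    have h2 := hG (Nat.le_succ m)
    simp only [Nat.succ_eq_add_one] at h2
    nlinarith [mul_nonneg (sub_nonneg.2 h1) (sub_nonneg.2 h2)]

/-- One interval: the gaps it covers have sum of squares at most its squared length. -/
lemma interval_le (G : ℕ → ℝ) (hG : Monotone G) (m : ℕ) (p q : ℝ) (hpq : p ≤ q)
    (hq : ∃ j, G j = q) :
    ∑ k ∈ range m, (if p ≤ G k ∧ G k < q then (G (k+1) - G k)^2 else 0) ≤ (q - p)^2 := by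
  obtain ⟨j, hj⟩ := hq
  set H : ℕ → ℝ := fun k => max p (min (G k) q) with hH
  have hHm : Monotone H := fun a b hab => max_le_max le_rfl (min_le_min (hG hab) le_rfl)
  have h1 := sum_sq_le H hHm m
  have hlo : ∀ k, p ≤ H k := fun k => le_max_left _ _
  have hhi : ∀ k, H k ≤ q := fun k => max_le hpq (min_le_right _ _)
  have h2 : (H m - H 0)^2 ≤ (q-p)^2 := by
    have := hHm (Nat.zero_le m)
    apply pow_le_pow_left₀ (by linarith)
    linarith [hhi m, hlo 0]
  refine le_trans (sum_le_sum ?_) (h1.trans h2)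
  intro k _
  split_ifs with hc
  · have hkj : k + 1 ≤ j := by
      by_contra hcon
      have : G j ≤ G k := hG (by omega)
      linarith [hc.2]
    have h3 : G (k+1) ≤ q := hj ▸ hG hkj
    have h4 : G k ≤ G (k+1) := hG (Nat.le_succ k)
    have e1 : H k = G k := by simp [hH, hc.1, hc.2.le]
    have e2 : H (k+1) = G (k+1) := by simp [hH, h3, hc.1.trans h4]
    rw [e1, e2]
  · positivity

lemma cover_le {V ι : Type*} [Fintype V] (g : V → ℝ) (hg : ∑ v, g v = 0)
    (F : Finset ι) (u v : ι → V) (hle : ∀ a ∈ F, g (v a) ≤ g (u a))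
    (hc : ∀ t, (∃ x, g x ≤ t) → (∃ x, t < g x) → ∃ a ∈ F, g (v a) ≤ t ∧ t < g (u a)) :
    ∑ x, g x ^ 2 ≤ (Fintype.card V : ℝ)^2 / 8 * ∑ a ∈ F, (g (u a) - g (v a))^2 := by
  classical
  rcases Nat.eq_zero_or_pos (Fintype.card V) with h0 | hpos
  · haveI := Fintype.card_eq_zero_iff.1 h0
    simp [h0]
  obtain ⟨m, hm⟩ : ∃ m, Fintype.card V = m + 1 := ⟨_, (Nat.succ_pred_eq_of_pos hpos).symm⟩
  let e0 : Fin (m+1) ≃ V := (Fintype.equivFinOfCardEq hm).symm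
  let e : Fin (m+1) ≃ V := (Tuple.sort (g ∘ e0)).trans e0
  have hmono : Monotone (g ∘ e) := Tuple.monotone_sort (g ∘ e0)
  let G : ℕ → ℝ := fun k => g (e ⟨min k m, by omega⟩)
  have hG : Monotone G := by
    intro a b hab
    apply hmono
    simp only [Fin.mk_le_mk]
    omega
  have hGe : ∀ i : Fin (m+1), G i = g (e i) := by
    intro i
    have : (⟨min (i:ℕ) m, by omega⟩ : Fin (m+1)) = i := by
      apply Fin.ext; simp; omega
    simp only [G, this]
  have hsurj : ∀ x, ∃ j, G j = g x := fun x => ⟨e.symm x, by rw [hGe]; simp⟩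
  have hs : ∀ φ : ℝ → ℝ, ∑ i ∈ range (m+1), φ (G i) = ∑ x, φ (g x) := by
    intro φ
    rw [Finset.sum_range, ← e.sum_comp]
    simp only [hGe]
  have h1 := wirt G m ((hs id).trans hg)
  rw [hs (fun t => t^2)] at h1
  rw [hm]
  push_cast
  refine h1.trans (mul_le_mul_of_nonneg_left ?_ (by positivity))
  calc ∑ k ∈ range m, (G (k+1) - G k)^2
      ≤ ∑ k ∈ range m, ∑ a ∈ F,
          (if g (v a) ≤ G k ∧ G k < g (u a) then (G (k+1) - G k)^2 else 0) := by
        apply sum_le_sum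
        intro k _
        have hnn : ∀ a ∈ F, 0 ≤
          (if g (v a) ≤ G k ∧ G k < g (u a) then (G (k+1) - G k)^2 else 0) := by
          intro a _; split_ifs <;> positivity
        rcases (hG (Nat.le_succ k)).eq_or_lt with heq | hlt
        · have : G (k+1) - G k = 0 := by rw [heq]; simp
          rw [this]; simp
        · obtain ⟨a, haF, ha⟩ := hc (G k) ⟨_, le_rfl⟩ ⟨_, hlt⟩
          have := single_le_sum hnn haF
          rwa [if_pos ha] at this
    _ = ∑ a ∈ F, ∑ k ∈ range m,
          (if g (v a) ≤ G k ∧ G k < g (u a) then (G (k+1) - G k)^2 else 0) := sum_comm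
    _ ≤ _ := by
        apply sum_le_sum
        intro a ha
        exact interval_le G hG m _ _ (hle a ha) (hsurj _)

/-- Exchange arc: every tight set containing `v` contains `u`. -/
def Arc {V : Type*} (f : Finset V → ℝ) (x : V → ℝ) (u v : V) : Prop :=
  ∀ S : Finset V, ∑ w ∈ S, x w = f S → v ∈ S → u ∈ S

lemma tight_closed {V : Type*} [Fintype V] [DecidableEq V] (f : Finset V → ℝ) (x : V → ℝ)
    (hf : Submodular f) (hx : InBasePolytope f x) (S T : Finset V)
    (hS : ∑ w ∈ S, x w = f S) (hT : ∑ w ∈ T, x w = f T) :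
    ∑ w ∈ S ∪ T, x w = f (S ∪ T) ∧ ∑ w ∈ S ∩ T, x w = f (S ∩ T) := by
  have h1 := hf S T
  have h2 := hx.1 (S ∪ T)
  have h3 := hx.1 (S ∩ T)
  have h4 := Finset.sum_union_inter (s₁ := S) (s₂ := T) (f := x)
  constructor <;> linarith

lemma tight_of_no_arc {V : Type*} [Fintype V] [DecidableEq V] (f : Finset V → ℝ) (x : V → ℝ)
    (hf : Submodular f) (h0 : f ∅ = 0) (hx : InBasePolytope f x) (L : Finset V)
    (h : ∀ u v, u ∉ L → v ∈ L → ¬ Arc f x u v) : ∑ w ∈ L, x w = f L := by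
  -- for v in L and a finite set U outside L there is a tight set containing v, avoiding U
  have h1 : ∀ v ∈ L, ∀ U : Finset V, (∀ u ∈ U, u ∉ L) →
      ∃ S, ∑ w ∈ S, x w = f S ∧ v ∈ S ∧ ∀ u ∈ U, u ∉ S := by
    intro v hv U
    induction U using Finset.induction_on with
    | empty => intro _; exact ⟨univ, hx.2, mem_univ _, by simp⟩
    | insert a U ha ih =>
      intro hU
      obtain ⟨S, hS, hvS, hUS⟩ := ih (fun u hu => hU u (mem_insert_of_mem hu))
      have := h a v (hU a (mem_insert_self _ _)) hv
      unfold Arc at this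
      push Not at this
      obtain ⟨T, hT, hvT, haT⟩ := this
      refine ⟨S ∩ T, (tight_closed f x hf hx S T hS hT).2, mem_inter.2 ⟨hvS, hvT⟩, ?_⟩
      intro u hu hmem
      rw [mem_inter] at hmem
      rcases mem_insert.1 hu with rfl | hu
      · exact haT hmem.2
      · exact hUS u hu hmem.1
  have h2 : ∀ W : Finset V, W ⊆ L → ∃ S, ∑ w ∈ S, x w = f S ∧ W ⊆ S ∧ S ⊆ L := by
    intro W
    induction W using Finset.induction_on with
    | empty => intro _; exact ⟨∅, by simp [h0], by simp, by simp⟩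
    | insert a W ha ih =>
      intro hW
      obtain ⟨S, hS, hWS, hSL⟩ := ih (fun u hu => hW (mem_insert_of_mem hu))
      obtain ⟨T, hT, haT, hTL⟩ := h1 a (hW (mem_insert_self _ _)) (univ \ L) (by simp)
      refine ⟨S ∪ T, (tight_closed f x hf hx S T hS hT).1, ?_, ?_⟩
      · intro w hw
        rcases mem_insert.1 hw with rfl | hw
        · exact mem_union_right _ haT
        · exact mem_union_left _ (hWS hw)
      · intro w hw
        rcases mem_union.1 hw with hw | hw
        · exact hSL hw
        · by_contra hcon
          exact hTL w (by simp [hcon]) hw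
  obtain ⟨S, hS, hLS, hSL⟩ := h2 L (Subset.refl _)
  rwa [Subset.antisymm hSL hLS] at hS

/-- Minimal covers. -/
lemma exists_cover {V : Type*} [Fintype V] [DecidableEq V] {r : ℕ}
    (R : Fin r → V → V → Prop) (hR : ∀ i u v w, R i u v → R i v w → R i u w)
    (g : V → ℝ)
    (hc : ∀ t, (∃ x, g x ≤ t) → (∃ x, t < g x) → ∃ i u v, R i u v ∧ g v ≤ t ∧ t < g u) :
    ∃ F : Finset (Fin r × V × V),
      (∀ a ∈ F, R a.1 a.2.1 a.2.2) ∧ (∀ a ∈ F, g a.2.2 < g a.2.1) ∧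
      (∀ t, (∃ x, g x ≤ t) → (∃ x, t < g x) → ∃ a ∈ F, g a.2.2 ≤ t ∧ t < g a.2.1) ∧
      (∀ a ∈ F, ∀ b ∈ F, a ≠ b → a.1 = b.1 →
        a.2.1 ≠ b.2.1 ∧ a.2.2 ≠ b.2.2 ∧ a.2.1 ≠ b.2.2 ∧ a.2.2 ≠ b.2.1) := by
  classical
  let Good : Finset (Fin r × V × V) → Prop := fun F =>
      (∀ a ∈ F, R a.1 a.2.1 a.2.2) ∧
      (∀ t, (∃ x, g x ≤ t) → (∃ x, t < g x) → ∃ a ∈ F, g a.2.2 ≤ t ∧ t < g a.2.1)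
  have hne : (univ.filter Good).Nonempty := by
    refine ⟨univ.filter (fun a => R a.1 a.2.1 a.2.2), ?_⟩
    simp only [mem_filter, mem_univ, true_and, Good]
    refine ⟨fun a h => h, ?_⟩
    intro t h1 h2
    obtain ⟨i, u, v, h⟩ := hc t h1 h2
    exact ⟨(i, u, v), h⟩
  obtain ⟨F, hF, hmin⟩ := exists_min_image _ Finset.card hne
  have hFG : Good F := (mem_filter.1 hF).2
  have hmin' : ∀ F', Good F' → F.card ≤ F'.card := fun F' h => hmin F' (by simp [h])
  have hrem : ∀ a ∈ F, ¬ (∀ t, g a.2.2 ≤ t → t < g a.2.1 →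
      ∃ b ∈ F, b ≠ a ∧ g b.2.2 ≤ t ∧ t < g b.2.1) := by
    intro a ha hcon
    have : Good (F.erase a) := by
      refine ⟨fun b hb => hFG.1 b (mem_of_mem_erase hb), ?_⟩
      intro t h1 h2
      obtain ⟨b, hb, hb1, hb2⟩ := hFG.2 t h1 h2
      by_cases hba : b = a
      · subst hba
        obtain ⟨c, hc, hcb, h⟩ := hcon t hb1 hb2
        exact ⟨c, mem_erase.2 ⟨hcb, hc⟩, h⟩
      · exact ⟨b, mem_erase.2 ⟨hba, hb⟩, hb1, hb2⟩
    have h1 := hmin' _ this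
    have h2 := card_erase_lt_of_mem ha
    omega
  have hlt : ∀ a ∈ F, g a.2.2 < g a.2.1 := by
    intro a ha
    by_contra hcon
    exact hrem a ha (fun t h1 h2 => absurd (h1.trans_lt h2) hcon)
  have hnest : ∀ a ∈ F, ∀ b ∈ F, a ≠ b → ¬ (g b.2.2 ≤ g a.2.2 ∧ g a.2.1 ≤ g b.2.1) := by
    intro a ha b hb hab h
    exact hrem a ha (fun t h1 h2 => ⟨b, hb, hab.symm, h.1.trans h1, h2.trans_le h.2⟩)
  have hmerge : ∀ a ∈ F, ∀ b ∈ F, a ≠ b → a.1 = b.1 → a.2.1 ≠ b.2.2 := by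
    intro a ha b hb hab hi he
    have hG : Good (insert (a.1, b.2.1, a.2.2) ((F.erase a).erase b)) := by
      constructor
      · intro c hc
        rcases mem_insert.1 hc with rfl | hc
        · have h1 := hFG.1 a ha
          have h2 := hFG.1 b hb
          rw [← hi, ← he] at h2
          exact hR _ _ _ _ h2 h1
        · exact hFG.1 c (mem_of_mem_erase (mem_of_mem_erase hc))
      · intro t h1 h2
        obtain ⟨c, hc, hc1, hc2⟩ := hFG.2 t h1 h2
        have la := hlt a ha
        have lb := hlt b hb
        rw [← he] at lb
        by_cases hca : c = a
        · subst hca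
          exact ⟨_, mem_insert_self _ _, hc1, hc2.trans lb⟩
        by_cases hcb : c = b
        · subst hcb
          refine ⟨_, mem_insert_self _ _, ?_, hc2⟩
          rw [← he] at hc1
          exact la.le.trans hc1
        · exact ⟨c, mem_insert_of_mem (mem_erase.2 ⟨hcb, mem_erase.2 ⟨hca, hc⟩⟩), hc1, hc2⟩
    have h1 := hmin' _ hG
    have h2 := card_insert_le (a.1, b.2.1, a.2.2) ((F.erase a).erase b)
    have h3 := card_erase_lt_of_mem (mem_erase.2 ⟨hab.symm, hb⟩)
    have h4 := card_erase_lt_of_mem ha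
    omega
  refine ⟨F, hFG.1, hlt, hFG.2, ?_⟩
  intro a ha b hb hab hi
  refine ⟨?_, ?_, hmerge a ha b hb hab hi, (hmerge b hb a ha hab.symm hi.symm).symm⟩
  · intro he
    rcases le_total (g a.2.2) (g b.2.2) with h | h
    · exact hnest b hb a ha hab.symm ⟨h, by rw [he]⟩
    · exact hnest a ha b hb hab ⟨h, by rw [he]⟩
  · intro he
    rcases le_total (g a.2.1) (g b.2.1) with h | h
    · exact hnest a ha b hb hab ⟨by rw [he], h⟩
    · exact hnest b hb a ha hab.symm ⟨by rw [he], h⟩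

/-- The arc vector. -/
def av {V : Type*} [DecidableEq V] {r : ℕ} (a : Fin r × V × V) : Fin r × V → ℝ :=
  fun q => (if q = (a.1, a.2.2) then 1 else 0) - (if q = (a.1, a.2.1) then 1 else 0)

lemma av_inner {V : Type*} [Fintype V] [DecidableEq V] {r : ℕ} (a b : Fin r × V × V) :
    ∑ q, av a q * av b q = av b (a.1, a.2.2) - av b (a.1, a.2.1) := by
  simp [av, sub_mul, sum_sub_distrib]

/-- Descent direction. -/
lemma descent {V : Type*} [Fintype V] [DecidableEq V] {r : ℕ}
    (f : Fin r → Finset V → ℝ)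
    (hsub : ∀ i, Submodular (f i)) (h0 : ∀ i, f i ∅ = 0)
    (s : V → ℝ) (hsB : InBasePolytope (fun S => ∑ i, f i S) s)
    (x : Fin r × V → ℝ) (hx : ∀ i, InBasePolytope (f i) (fun v => x (i, v)))
    (g : V → ℝ) (hg : ∀ v, g v = ∑ i, x (i, v) - s v) :
    ∃ (z : Fin r × V → ℝ) (σ : ℝ),
      (∀ i S, ∑ v ∈ S, x (i, v) = f i S → ∑ v ∈ S, z (i, v) ≤ 0) ∧
      (∀ i, ∑ v, z (i, v) = 0) ∧
      ∑ q, z q ^ 2 = 2 * σ ∧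
      ∑ v, g v * ∑ i, z (i, v) = - σ ∧
      ∑ v, g v ^ 2 ≤ (Fintype.card V : ℝ)^2 / 8 * σ := by
  have hg0 : ∑ v, g v = 0 := by
    simp only [hg, sum_sub_distrib]
    rw [sum_comm, hsB.2]
    simp only [fun i => (hx i).2, sub_self]
  have hc : ∀ t, (∃ x, g x ≤ t) → (∃ x, t < g x) →
      ∃ i u v, Arc (f i) (fun v => x (i, v)) u v ∧ g v ≤ t ∧ t < g u := by
    rintro t ⟨x1, hx1⟩ ⟨x2, hx2⟩
    by_contra hcon
    push Not at hcon
    let L : Finset V := univ.filter (fun v => g v ≤ t)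
    have ht : ∀ i, ∑ w ∈ L, x (i, w) = f i L := by
      intro i
      apply tight_of_no_arc (f i) (fun v => x (i, v)) (hsub i) (h0 i) (hx i) L
      intro u v hu hv harc
      simp only [L, mem_filter, mem_univ, true_and, not_le] at hu hv
      exact absurd hu (not_lt.2 (hcon i u v harc hv))
    have h1 : 0 ≤ ∑ w ∈ L, g w := by
      simp only [hg, sum_sub_distrib]
      rw [sum_comm]
      simp only [ht]
      linarith [hsB.1 L]
    have h2 : ∑ w ∈ L, g w + ∑ w ∈ univ.filter (fun v => ¬ g v ≤ t), g w = 0 := by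
      rw [← hg0]; exact sum_filter_add_sum_filter_not _ _ _
    have h3 : ∑ w ∈ L, g w ≤ ∑ w ∈ L, t := sum_le_sum (fun w hw => (mem_filter.1 hw).2)
    have h4 : ∑ w ∈ univ.filter (fun v => ¬ g v ≤ t), t
        < ∑ w ∈ univ.filter (fun v => ¬ g v ≤ t), g w := by
      apply sum_lt_sum_of_nonempty ⟨x2, by simp [hx2]⟩
      intro w hw
      exact not_le.1 (mem_filter.1 hw).2
    simp only [sum_const, nsmul_eq_mul] at h3 h4
    rcases le_or_gt 0 t with htt | htt
    · have : 0 ≤ ((univ.filter (fun v => ¬ g v ≤ t)).card : ℝ) * t := by positivity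
      linarith
    · have : 0 < (L.card : ℝ) := by
        exact_mod_cast card_pos.2 ⟨x1, by simp [L, hx1]⟩
      nlinarith
  obtain ⟨F, hFR, hlt, hcov, hdis⟩ := exists_cover
    (fun i => Arc (f i) (fun v => x (i, v)))
    (fun i u v w h1 h2 S hS hw => h1 S hS (h2 S hS hw)) g hc
  let c : Fin r × V × V → ℝ := fun a => g a.2.1 - g a.2.2
  refine ⟨fun q => ∑ a ∈ F, c a * av a q, ∑ a ∈ F, c a ^ 2, ?_, ?_, ?_, ?_, ?_⟩
  · intro i S hS
    rw [sum_comm]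
    apply sum_nonpos
    intro a ha
    rw [← mul_sum]
    apply mul_nonpos_of_nonneg_of_nonpos (sub_nonneg.2 (hlt a ha).le)
    by_cases hi : i = a.1
    · subst hi
      have := hFR a ha S hS
      simp only [av, sum_sub_distrib, Prod.mk.injEq, true_and, sum_ite_eq']
      split_ifs <;> simp_all
    · simp [av, hi]
  · intro i
    rw [sum_comm]
    apply sum_eq_zero
    intro a ha
    rw [← mul_sum]
    by_cases hi : i = a.1
    · subst hi
      simp [av, sum_sub_distrib]
    · simp [av, hi]
  · have hin : ∀ a ∈ F, ∀ b ∈ F, ∑ q, av a q * av b q = if a = b then 2 else 0 := by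
      intro a ha b hb
      rw [av_inner]
      have la := hlt a ha
      have hne : a.2.2 ≠ a.2.1 := fun h => by rw [h] at la; exact lt_irrefl _ la
      split_ifs with hab
      · subst hab
        simp [av, hne, hne.symm]
        norm_num
      · by_cases hi : a.1 = b.1
        · obtain ⟨h1, h2, h3, h4⟩ := hdis a ha b hb hab hi
          simp [av, h1, h2, h3, h4]
        · simp [av, hi]
    calc ∑ q, (∑ a ∈ F, c a * av a q)^2
        = ∑ q, ∑ a ∈ F, ∑ b ∈ F, c a * c b * (av a q * av b q) := by
          apply sum_congr rfl
          intro q _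
          rw [sq, sum_mul_sum]
          apply sum_congr rfl; intro a _
          apply sum_congr rfl; intro b _
          ring
      _ = ∑ a ∈ F, ∑ b ∈ F, c a * c b * ∑ q, (av a q * av b q) := by
          rw [sum_comm]
          apply sum_congr rfl; intro a _
          rw [sum_comm]
          apply sum_congr rfl; intro b _
          rw [mul_sum]
      _ = ∑ a ∈ F, ∑ b ∈ F, c a * c b * (if a = b then 2 else 0) := by
          apply sum_congr rfl; intro a ha
          apply sum_congr rfl; intro b hb
          rw [hin a ha b hb]
      _ = 2 * ∑ a ∈ F, c a ^ 2 := by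
          rw [mul_sum]
          apply sum_congr rfl; intro a ha
          simp [ha]
          ring
  · have h1 : ∀ a : Fin r × V × V, ∑ v, g v * ∑ i, av a (i, v) = - c a := by
      intro a
      have : ∀ v, ∑ i, av a (i, v) = (if v = a.2.2 then 1 else 0) - (if v = a.2.1 then 1 else 0) := by
        intro v
        simp only [av, sum_sub_distrib, Prod.mk.injEq]
        simp [ite_and]
      simp [this, mul_sub, sum_sub_distrib, c]
    calc ∑ v, g v * ∑ i, ∑ a ∈ F, c a * av a (i, v)
        = ∑ v, ∑ a ∈ F, c a * (g v * ∑ i, av a (i, v)) := by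
          apply sum_congr rfl; intro v _
          rw [sum_comm, mul_sum]
          apply sum_congr rfl; intro a _
          rw [← mul_sum]; ring
      _ = ∑ a ∈ F, c a * ∑ v, (g v * ∑ i, av a (i, v)) := by
          rw [sum_comm]
          apply sum_congr rfl; intro a _
          rw [mul_sum]
      _ = _ := by
          rw [← sum_neg_distrib]
          apply sum_congr rfl; intro a _
          rw [h1]; ring
  · exact cover_le g hg0 F (fun a => a.2.1) (fun a => a.2.2) (fun a ha => (hlt a ha).le) hcov

lemma norm2_nonneg {ι : Type*} [Fintype ι] (x : ι → ℝ) : 0 ≤ norm2 x := Real.sqrt_nonneg _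

lemma norm2_sq {ι : Type*} [Fintype ι] (x : ι → ℝ) : norm2 x ^ 2 = ∑ i, x i ^ 2 :=
  Real.sq_sqrt (sum_nonneg (fun _ _ => sq_nonneg _))

lemma norm2_eq {ι : Type*} [Fintype ι] (x : ι → ℝ) : norm2 x = ‖WithLp.toLp 2 x‖ := by
  simp [norm2, EuclideanSpace.norm_eq]

lemma norm2_add_le {ι : Type*} [Fintype ι] (x y : ι → ℝ) : norm2 (x + y) ≤ norm2 x + norm2 y := by
  simp only [norm2_eq, WithLp.toLp_add]
  exact norm_add_le _ _

lemma norm2_smul {ι : Type*} [Fintype ι] (c : ℝ) (hc : 0 ≤ c) (x : ι → ℝ) :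
    norm2 (c • x) = c * norm2 x := by
  simp only [norm2_eq, WithLp.toLp_smul, norm_smul, Real.norm_eq_abs, abs_of_nonneg hc]

lemma norm2_cont {ι : Type*} [Fintype ι] : Continuous (norm2 : (ι → ℝ) → ℝ) := by
  unfold norm2
  fun_prop

lemma P_compact {V : Type*} [Fintype V] [DecidableEq V] {r : ℕ}
    (f : Fin r → Finset V → ℝ) :
    IsCompact {y : Fin r × V → ℝ | ∀ i, InBasePolytope (f i) (fun v => y (i, v))} := by
  have hcl : IsClosed {y : Fin r × V → ℝ | ∀ i, InBasePolytope (f i) (fun v => y (i, v))} := by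
    simp only [InBasePolytope, Set.setOf_forall, Set.setOf_and]
    refine isClosed_iInter fun i => IsClosed.inter (isClosed_iInter fun S => ?_) ?_
    · exact isClosed_le (by fun_prop) (by fun_prop)
    · exact isClosed_eq (by fun_prop) (by fun_prop)
  refine IsCompact.of_isClosed_subset (isCompact_univ_pi
    (fun q : Fin r × V => isCompact_Icc (a := f q.1 univ - f q.1 (univ.erase q.2))
      (b := f q.1 {q.2}))) hcl ?_
  intro y hy q _
  have h := hy q.1
  have h1 := h.1 {q.2}
  have h2 := h.1 (univ.erase q.2)
  have h3 := h.2
  rw [← add_sum_erase _ _ (mem_univ q.2)] at h3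
  simp only [sum_singleton] at h1
  exact ⟨by linarith, h1⟩

/-- Small steps along a descent direction strictly decrease the penalised distance. -/
lemma step_descent {ι : Type*} [Fintype ι] (g h : ι → ℝ) (C N : ℝ) (hC : 0 < C) (hN : 0 ≤ N)
    (hg : 0 < norm2 g) (hd : C * ∑ v, g v * h v < - (norm2 g * N)) :
    ∀ᶠ ε in nhdsWithin (0:ℝ) (Set.Ioi 0), C * norm2 (g + ε • h) + ε * N < C * norm2 g := by
  have e1 : ∀ᶠ ε in nhdsWithin (0:ℝ) (Set.Ioi 0), ε * N < C * norm2 g := by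
    apply Filter.Tendsto.eventually_lt_const (v := 0) (by positivity)
    apply tendsto_nhdsWithin_of_tendsto_nhds
    have : Continuous (fun ε : ℝ => ε * N) := by fun_prop
    simpa using this.tendsto 0
  have e2 : ∀ᶠ ε in nhdsWithin (0:ℝ) (Set.Ioi 0),
      2 * (C * ∑ v, g v * h v) + 2 * (norm2 g * N) + ε * (C * norm2 h ^ 2) < 0 := by
    apply Filter.Tendsto.eventually_lt_const
      (v := 2 * (C * ∑ v, g v * h v) + 2 * (norm2 g * N)) (by linarith)
    apply tendsto_nhdsWithin_of_tendsto_nhds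
    have : Continuous (fun ε : ℝ =>
      2 * (C * ∑ v, g v * h v) + 2 * (norm2 g * N) + ε * (C * norm2 h ^ 2)) := by fun_prop
    simpa using this.tendsto 0
  filter_upwards [e1, e2, self_mem_nhdsWithin] with ε h1 h2 h3
  have h3 : 0 < ε := h3
  have hexp : norm2 (g + ε • h) ^ 2
      = norm2 g ^ 2 + 2 * ε * (∑ v, g v * h v) + ε^2 * norm2 h ^ 2 := by
    simp only [norm2_sq, mul_sum, ← sum_add_distrib]
    apply sum_congr rfl
    intro v _
    simp only [Pi.add_apply, Pi.smul_apply, smul_eq_mul]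
    ring
  have key : (C * norm2 (g + ε • h))^2 < (C * norm2 g - ε * N)^2 := by
    rw [mul_pow, hexp]
    have h4 := mul_neg_of_pos_of_neg (mul_pos hC h3) h2
    nlinarith [sq_nonneg (ε * N)]
  have := lt_of_pow_lt_pow_left₀ 2 (by linarith) key
  linarith

lemma error_bound {V : Type*} [Fintype V] [DecidableEq V] {r : ℕ}
    (f : Fin r → Finset V → ℝ)
    (hsub : ∀ i, Submodular (f i)) (h0 : ∀ i, f i ∅ = 0)
    (s : V → ℝ) (hsB : InBasePolytope (fun S => ∑ i, f i S) s)
    (y : Fin r × V → ℝ) (hy : ∀ i, InBasePolytope (f i) (fun v => y (i, v)))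
    (C : ℝ) (hC : (Fintype.card V : ℝ) / 2 < C) :
    ∃ x : Fin r × V → ℝ, (∀ i, InBasePolytope (f i) (fun v => x (i, v))) ∧
      (∀ v, ∑ i, x (i, v) = s v) ∧
      norm2 (y - x) ≤ C * norm2 (fun v => ∑ i, y (i, v) - s v) := by
  have hC0 : 0 < C := lt_of_le_of_lt (by positivity) hC
  let Φ : (Fin r × V → ℝ) → ℝ := fun x =>
    norm2 (y - x) + C * norm2 (fun v => ∑ i, x (i, v) - s v)
  have hΦ : Continuous Φ := by
    refine Continuous.add (norm2_cont.comp (by fun_prop))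
      (continuous_const.mul (norm2_cont.comp (by fun_prop)))
  obtain ⟨x, hx, hmin⟩ := (P_compact f).exists_isMinOn ⟨y, hy⟩ hΦ.continuousOn
  have hx : ∀ i, InBasePolytope (f i) (fun v => x (i, v)) := hx
  have hxy : Φ x ≤ Φ y := hmin hy
  have hnn := norm2_nonneg (fun v => ∑ i, x (i, v) - s v)
  refine ⟨x, hx, ?_, ?_⟩
  · by_contra hcon
    set g : V → ℝ := fun v => ∑ i, x (i, v) - s v with hg
    have hgpos : 0 < norm2 g := by
      rcases hnn.eq_or_lt with h | h
      · exfalso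
        apply hcon
        have h1 := norm2_sq g
        rw [← h] at h1
        have h2 := (sum_eq_zero_iff_of_nonneg (fun i _ => sq_nonneg (g i))).1
          (by rw [← h1]; simp)
        intro v
        have h3 := pow_eq_zero_iff (two_ne_zero) |>.1 (h2 v (mem_univ v))
        exact sub_eq_zero.1 h3
      · exact h
    obtain ⟨z, σ, hz1, hz2, hz3, hz4, hz5⟩ :=
      descent f hsub h0 s hsB x hx g (fun v => rfl)
    rw [← norm2_sq] at hz3 hz5
    have hσ : 0 < σ := by
      by_contra hcon
      have : (Fintype.card V : ℝ)^2 / 8 * σ ≤ 0 :=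
        mul_nonpos_of_nonneg_of_nonpos (by positivity) (not_lt.1 hcon)
      nlinarith
    have hd : C * ∑ v, g v * (∑ i, z (i, v)) < - (norm2 g * norm2 z) := by
      rw [hz4]
      have h1 : (norm2 g * norm2 z)^2 ≤ ((Fintype.card V : ℝ) / 2 * σ)^2 := by
        rw [mul_pow, hz3]
        nlinarith
      have h2 := abs_le_of_sq_le_sq h1 (by positivity)
      have h3 := (le_abs_self _).trans h2
      nlinarith [mul_lt_mul_of_pos_right hC hσ]
    have ev1 := step_descent g (fun v => ∑ i, z (i, v)) C (norm2 z) hC0 (norm2_nonneg z) hgpos hd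
    have ev2 : ∀ᶠ ε in nhdsWithin (0:ℝ) (Set.Ioi 0), ∀ i, ∀ S : Finset V,
        ∑ v ∈ S, x (i, v) + ε * ∑ v ∈ S, z (i, v) ≤ f i S := by
      rw [Filter.eventually_all]; intro i
      rw [Filter.eventually_all]; intro S
      rcases ((hx i).1 S).eq_or_lt with h | h
      · filter_upwards [self_mem_nhdsWithin] with ε hε
        have hε : 0 < ε := hε
        have := hz1 i S h
        nlinarith
      · have hc : Continuous (fun ε : ℝ => ∑ v ∈ S, x (i, v) + ε * ∑ v ∈ S, z (i, v)) := by
          fun_prop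
        have ht := hc.tendsto 0
        simp only [zero_mul, add_zero] at ht
        exact ((tendsto_nhdsWithin_of_tendsto_nhds ht).eventually_lt_const h).mono
          (fun _ h => h.le)
    obtain ⟨ε, ⟨he1, he2⟩, he3⟩ := ((ev1.and ev2).and self_mem_nhdsWithin).exists
    have he3 : 0 < ε := he3
    have hmem : ∀ i, InBasePolytope (f i) (fun v => (x + ε • z) (i, v)) := by
      intro i
      constructor
      · intro S
        simpa [sum_add_distrib, mul_sum] using he2 i S
      · have := (hx i).2
        simp only [Pi.add_apply, Pi.smul_apply, smul_eq_mul, sum_add_distrib, ← mul_sum, hz2]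
        simpa using this
    have hle : Φ x ≤ Φ (x + ε • z) := hmin hmem
    have eA : (fun v => ∑ i, (x + ε • z) (i, v) - s v) = g + ε • (fun v => ∑ i, z (i, v)) := by
      ext v
      simp [hg, sum_add_distrib, mul_sum]
      ring
    have eB : norm2 (y - (x + ε • z)) ≤ norm2 (y - x) + ε * norm2 z := by
      have : y - (x + ε • z) = (y - x) + ε • (-z) := by
        ext q; simp; ring
      rw [this]
      refine (norm2_add_le _ _).trans ?_
      rw [norm2_smul _ he3.le]
      have : norm2 (-z) = norm2 z := by simp [norm2]
      rw [this]
    simp only [Φ, eA] at hle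
    linarith
  · have : Φ y = C * norm2 (fun v => ∑ i, y (i, v) - s v) := by
      simp [Φ, norm2]
    rw [this] at hxy
    simp only [Φ] at hxy
    have := mul_nonneg hC0.le hnn
    linarith

lemma norm_A_le {V : Type*} [Fintype V] {r : ℕ} (y a : Fin r × V → ℝ) (s : V → ℝ)
    (ha : ∀ v, ∑ i, a (i, v) = s v) :
    norm2 (fun v => ∑ i, y (i, v) - s v) ≤ Real.sqrt r * norm2 (y - a) := by
  unfold norm2
  rw [← Real.sqrt_mul (by positivity)]
  apply Real.sqrt_le_sqrt
  rw [Fintype.sum_prod_type_right, mul_sum]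
  apply sum_le_sum
  intro v _
  beta_reduce
  rw [← ha v, ← sum_sub_distrib]
  simpa using sq_sum_le_card_mul_sum_sq (s := (univ : Finset (Fin r)))
    (f := fun i => y (i, v) - a (i, v))

end KB

/-- for every `y ∈ 𝒫 \ E` one has `d(y, E) ≤ (n√r/2) · d(y, 𝒜')`,
i.e. `κ(y) ≤ n√r/2`. -/
theorem kappa_bound_on_P
    {V : Type*} [Fintype V] [DecidableEq V] (r : ℕ)
    (f : Fin r → Finset V → ℝ)
    (hsub : ∀ i, Submodular (f i)) (h0 : ∀ i, f i ∅ = 0)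
    (sstar : V → ℝ)
    (hsB : InBasePolytope (fun S => ∑ i, f i S) sstar)
    (hsMin : ∀ z : V → ℝ, InBasePolytope (fun S => ∑ i, f i S) z →
      ∑ v, sstar v ^ 2 ≤ ∑ v, z v ^ 2)
    (P A' E : Set (Fin r × V → ℝ))
    (hP : P = {y | ∀ i, InBasePolytope (f i) (fun v => y (i, v))})
    (hA' : A' = {a | ∀ v, ∑ i, a (i, v) = sstar v})
    (hE : E = {y ∈ P | ∀ v, ∑ i, y (i, v) = sstar v})
    (y : Fin r × V → ℝ) (hyP : y ∈ P) (hyE : y ∉ E) :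
    distSet y E ≤ ((Fintype.card V : ℝ) * Real.sqrt r / 2) * distSet y A' := by
  subst hP hA' hE
  have hb : ∀ K : Set (Fin r × V → ℝ), BddBelow ((fun z => norm2 (y - z)) '' K) := by
    intro K
    refine ⟨0, ?_⟩
    rintro _ ⟨z, _, rfl⟩
    exact KB.norm2_nonneg _
  have h1 : ∀ C : ℝ, (Fintype.card V : ℝ) / 2 < C →
      distSet y {y ∈ {y : Fin r × V → ℝ | ∀ i, InBasePolytope (f i) (fun v => y (i, v))} |
        ∀ v, ∑ i, y (i, v) = sstar v} ≤ C * norm2 (fun v => ∑ i, y (i, v) - sstar v) := by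
    intro C hC
    obtain ⟨x, hx1, hx2, hx3⟩ := KB.error_bound f hsub h0 sstar hsB y hyP C hC
    exact (csInf_le (hb _) (Set.mem_image_of_mem _ (And.intro hx1 hx2))).trans hx3
  have h2 : distSet y {y ∈ {y : Fin r × V → ℝ | ∀ i, InBasePolytope (f i) (fun v => y (i, v))} |
        ∀ v, ∑ i, y (i, v) = sstar v} ≤
      (Fintype.card V : ℝ) / 2 * norm2 (fun v => ∑ i, y (i, v) - sstar v) := by
    have hc : Continuous (fun C : ℝ => C * norm2 (fun v => ∑ i, y (i, v) - sstar v)) := by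
      fun_prop
    refine ge_of_tendsto (tendsto_nhdsWithin_of_tendsto_nhds
      (hc.tendsto ((Fintype.card V : ℝ) / 2)) (s := Set.Ioi ((Fintype.card V : ℝ) / 2))) ?_
    filter_upwards [self_mem_nhdsWithin] with C hC
    exact h1 C hC
  obtain ⟨x, hx1, hx2, -⟩ := KB.error_bound f hsub h0 sstar hsB y hyP
    ((Fintype.card V : ℝ) / 2 + 1) (by linarith)
  have h3 : norm2 (fun v => ∑ i, y (i, v) - sstar v) ≤
      Real.sqrt r * distSet y {a | ∀ v, ∑ i, a (i, v) = sstar v} := by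
    rcases (Real.sqrt_nonneg (r:ℝ)).eq_or_lt with hr | hr
    · have := KB.norm_A_le y x sstar hx2
      rw [← hr] at this ⊢
      simpa using this
    · rw [← div_le_iff₀' hr]
      refine le_csInf (Set.Nonempty.image _ ⟨x, hx2⟩) ?_
      rintro _ ⟨a, ha, rfl⟩
      rw [div_le_iff₀' hr]
      exact KB.norm_A_le y a sstar ha
  refine h2.trans ((mul_le_mul_of_nonneg_left h3 (by positivity)).trans (le_of_eq ?_))
  ring
end

section
/- For every y ∈ 𝒜' with y ∉ E one has d(y, E) ≤ (1 + n√r / 2) · d(y, 𝒫); in the notation of the paper, κ(y) ≤ 1 + n√r / 2 for every y ∈ 𝒜' \ E. -/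
open Finset

/-- Exchange: if `S` is not tight at `x ∈ B(g)`, some exchange into `S` is feasible. -/
lemma exists_exchange {V : Type*} [Fintype V] [DecidableEq V] (g : Finset V → ℝ)
    (hsub : Submodular g) (h0 : g ∅ = 0) (x : V → ℝ) (hx : InBasePolytope g x)
    (S : Finset V) (hS : ∑ v ∈ S, x v < g S) :
    ∃ u ∈ S, ∃ v, v ∉ S ∧ ∃ ε : ℝ, 0 < ε ∧
      InBasePolytope g (fun w => x w + ε * ((if w = u then 1 else 0) - (if w = v then 1 else 0))) := by
  classical
  have key : ∃ u ∈ S, ∃ v, v ∉ S ∧ ∀ T : Finset V, u ∈ T → v ∉ T → ∑ w ∈ T, x w < g T := by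
    by_contra hcon
    push Not at hcon
    have tightU : ∀ A B : Finset V, ∑ w ∈ A, x w = g A → ∑ w ∈ B, x w = g B →
        ∑ w ∈ A ∪ B, x w = g (A ∪ B) ∧ ∑ w ∈ A ∩ B, x w = g (A ∩ B) := by
      intro A B hA hB
      have h1 := hsub A B
      have h2 := hx.1 (A ∪ B)
      have h3 := hx.1 (A ∩ B)
      have h4 := Finset.sum_union_inter (s₁ := A) (s₂ := B) (f := x)
      constructor <;> linarith
    have step1 : ∀ u ∈ S, ∃ T : Finset V, u ∈ T ∧ T ⊆ S ∧ ∑ w ∈ T, x w = g T := by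
      intro u hu
      have : ∀ R : Finset V, (∀ v ∈ R, v ∉ S) →
          ∃ T : Finset V, u ∈ T ∧ (∀ v ∈ R, v ∉ T) ∧ ∑ w ∈ T, x w = g T := by
        intro R
        induction R using Finset.induction_on with
        | empty => intro _; exact ⟨univ, mem_univ _, by simp, hx.2⟩
        | insert a R ha ih =>
          intro hR
          obtain ⟨T, h1, h2, h3⟩ := ih (fun v hv => hR v (mem_insert_of_mem hv))
          obtain ⟨T', k1, k2, k3⟩ := hcon u hu a (hR a (mem_insert_self _ _))
          refine ⟨T ∩ T', mem_inter.2 ⟨h1, k1⟩, ?_, (tightU T T' h3 (le_antisymm (hx.1 _) k3)).2⟩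
          intro v hv hvT
          rw [mem_inter] at hvT
          rcases mem_insert.1 hv with rfl | hv
          · exact k2 hvT.2
          · exact h2 v hv hvT.1
      obtain ⟨T, h1, h2, h3⟩ := this Sᶜ (by simp)
      refine ⟨T, h1, ?_, h3⟩
      intro v hv
      by_contra hvS
      exact h2 v (by simpa using hvS) hv
    have step2 : ∀ R : Finset V, R ⊆ S → ∃ T : Finset V, R ⊆ T ∧ T ⊆ S ∧ ∑ w ∈ T, x w = g T := by
      intro R
      induction R using Finset.induction_on with
      | empty => intro _; exact ⟨∅, by simp, by simp, by simp [h0]⟩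
      | insert a R ha ih =>
        intro hR
        obtain ⟨T, h1, h2, h3⟩ := ih (fun v hv => hR (mem_insert_of_mem hv))
        obtain ⟨T', k1, k2, k3⟩ := step1 a (hR (mem_insert_self _ _))
        refine ⟨T ∪ T', ?_, union_subset h2 k2, (tightU T T' h3 k3).1⟩
        intro v hv
        rcases mem_insert.1 hv with rfl | hv
        · exact mem_union_right _ k1
        · exact mem_union_left _ (h1 hv)
    obtain ⟨T, h1, h2, h3⟩ := step2 S (Subset.refl _)
    have : T = S := Subset.antisymm h2 h1
    subst this
    linarith
  obtain ⟨u, hu, v, hv, hT⟩ := key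
  have hε : ∃ ε : ℝ, 0 < ε ∧ ∀ T : Finset V, u ∈ T → v ∉ T → ∑ w ∈ T, x w + ε ≤ g T := by
    let F : Finset (Finset V) := univ.filter (fun T => u ∈ T ∧ v ∉ T)
    have hF : F.Nonempty := ⟨S, by simp [F, hu, hv]⟩
    obtain ⟨T0, hT0, hmin⟩ := F.exists_min_image (fun T => g T - ∑ w ∈ T, x w) hF
    refine ⟨g T0 - ∑ w ∈ T0, x w, ?_, ?_⟩
    · simp only [F, mem_filter, mem_univ, true_and] at hT0
      linarith [hT T0 hT0.1 hT0.2]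
    · intro T h1 h2
      have := hmin T (by simp [F, h1, h2])
      linarith
  obtain ⟨ε, hε0, hε⟩ := hε
  refine ⟨u, hu, v, hv, ε, hε0, ?_, ?_⟩
  · intro T
    have hsum : ∑ w ∈ T, (x w + ε * ((if w = u then 1 else 0) - (if w = v then 1 else 0)))
        = ∑ w ∈ T, x w + ε * ((if u ∈ T then 1 else 0) - (if v ∈ T then 1 else 0)) := by
      rw [sum_add_distrib, ← mul_sum, sum_sub_distrib]
      simp
    rw [hsum]
    have hxT := hx.1 T
    by_cases h1 : u ∈ T <;> by_cases h2 : v ∈ T <;> simp only [h1, h2, if_true, if_false]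
    · linarith
    · linarith [hε T h1 h2]
    · linarith
    · linarith
  · rw [sum_add_distrib, ← mul_sum, sum_sub_distrib]
    simp [hx.2]

/-- The one-dimensional crossing lemma. -/
lemma crossing (m : ℕ) (l g : ℕ → ℝ) (hl : ∀ i j, i ≤ j → j ≤ m → l i ≤ l j) :
    ∀ (c : ℕ) (S : Finset ℕ), S.card ≤ c → (∀ j ∈ S, j ≤ m) →
    ∀ K : Finset ℕ, (∀ k ∈ K, ∃ u ∈ S, ∃ v ∈ S, v ≤ k ∧ k < u ∧ l u - g u ≤ l v - g v) →
    ∑ k ∈ K, (l (k+1) - l k)^2 ≤ 2 * ∑ j ∈ S, g j ^ 2 := by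
  intro c
  induction c with
  | zero =>
    intro S hc hS K hK
    have : S = ∅ := by simpa using hc
    subst this
    have : K = ∅ := by
      by_contra h
      obtain ⟨k, hk⟩ := Finset.nonempty_iff_ne_empty.2 h
      obtain ⟨u, hu, _⟩ := hK k hk
      simp at hu
    simp [this]
  | succ c ih =>
    intro S hc hS K hK
    by_cases hne : S.Nonempty
    swap
    · rw [Finset.not_nonempty_iff_eq_empty] at hne
      exact ih S (by simp [hne]) hS K hK
    obtain ⟨v, hv, hvmin⟩ := S.exists_min_image id hne
    simp only [id] at hvmin
    obtain ⟨u, hu, humax⟩ := (S.filter (fun j => l j - g j ≤ l v - g v)).exists_max_image id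
      ⟨v, by simp [hv]⟩
    simp only [id, mem_filter] at hu humax
    have hsplit : ∑ k ∈ K, (l (k+1) - l k)^2 ≤ ∑ k ∈ Ico v u, (l (k+1) - l k)^2
        + ∑ k ∈ K.filter (fun k => u ≤ k), (l (k+1) - l k)^2 := by
      rw [← Finset.sum_filter_add_sum_filter_not K (fun k => u ≤ k), add_comm]
      gcongr
      · intro k hk
        simp only [mem_filter, not_le, mem_Ico] at hk ⊢
        obtain ⟨_, _, v', hv', h, _⟩ := hK k hk.1
        have := hvmin v' hv'
        omega
    have hih := ih ((S.erase u).erase v) (by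
        have h1 : ((S.erase u).erase v).card ≤ (S.erase u).card := card_le_card (erase_subset _ _)
        have h2 := card_erase_of_mem hu.1
        omega) (fun j hj => hS j (mem_of_mem_erase (mem_of_mem_erase hj)))
        (K.filter (fun k => u ≤ k)) (by
          intro k hk
          rw [mem_filter] at hk
          obtain ⟨u', hu', v', hv', h1, h2, h3⟩ := hK k hk.1
          have hu'v : l v - g v < l u' - g u' := by
            by_contra hcon
            have := humax u' ⟨hu', not_lt.1 hcon⟩
            omega
          refine ⟨u', ?_, v', ?_, h1, h2, h3⟩
          · simp only [mem_erase]
            refine ⟨?_, ?_, hu'⟩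
            · rintro rfl; linarith
            · rintro rfl; omega
          · simp only [mem_erase]
            refine ⟨?_, ?_, hv'⟩
            · rintro rfl; linarith
            · rintro rfl; linarith [hu.2])
    have htel : ∀ b, v ≤ b → b ≤ m → ∑ k ∈ Ico v b, (l (k+1) - l k)^2 ≤ (l b - l v)^2 := by
      intro b hb
      induction b, hb using Nat.le_induction with
      | base => intro _; simp
      | succ b hb ihb =>
        intro hbm
        rw [Finset.sum_Ico_succ_top hb]
        have := ihb (by omega)
        have h1 := hl v b hb (by omega)
        have h2 := hl b (b+1) (by omega) hbm
        nlinarith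
    have hvu : v ≤ u := hvmin u hu.1
    have hum := hS u hu.1
    rcases hvu.eq_or_lt with rfl | hlt
    · have h1 : ∑ j ∈ (S.erase v).erase v, g j ^ 2 ≤ ∑ j ∈ S, g j ^ 2 :=
        Finset.sum_le_sum_of_subset_of_nonneg
          ((erase_subset _ _).trans (erase_subset _ _)) (fun _ _ _ => sq_nonneg _)
      simp only [Ico_self, sum_empty, zero_add] at hsplit
      linarith
    · have h1 := htel u hvu hum
      have h2 := hl v u hvu hum
      have h3 := Finset.add_sum_erase S (fun j => g j ^2) hu.1
      have h4 := Finset.add_sum_erase (S.erase u) (fun j => g j ^2)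
        (mem_erase.2 ⟨by omega, hv⟩ : v ∈ S.erase u)
      have h5 : (l u - l v)^2 ≤ 2 * (g u)^2 + 2 * (g v)^2 := by
        have : l u - l v ≤ g u - g v := by linarith [hu.2]
        nlinarith [sq_nonneg (g u + g v)]
      linarith

/-- Discrete Poincare inequality. -/
lemma poincare (m : ℕ) (d : ℕ → ℝ) (h0 : ∑ j ∈ range (m+1), d j = 0) :
    ∑ k ∈ range m, (∑ j ∈ range (k+1), d j)^2 ≤ ((m:ℝ)+1)^2 / 8 * ∑ j ∈ range (m+1), d j ^ 2 := by
  have key : ∀ k, k < m → 8 / ((m:ℝ)+1)^2 * ∑ j ∈ range k, (∑ i ∈ range (j+1), d i)^2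
      + ((m:ℝ) + 1 - 2 * (k+1) + 1) / ((k+1) * ((m:ℝ)+1 - (k+1))) * (∑ i ∈ range (k+1), d i)^2
      ≤ ∑ j ∈ range (k+1), d j ^ 2 := by
    intro k
    induction k with
    | zero =>
      intro h
      have hm : (0:ℝ) < m := by exact_mod_cast h
      have : ((m:ℝ) + 1 - 2 * (((0:ℕ):ℝ)+1) + 1) / ((((0:ℕ):ℝ)+1) * ((m:ℝ)+1 - (((0:ℕ):ℝ)+1))) = 1 := by
        push_cast
        rw [div_eq_one_iff_eq (by simp; omega)]
        ring
      rw [this]; simp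
    | succ k ih =>
      intro h
      have hk := ih (by omega)
      rw [sum_range_succ _ (k+1), sum_range_succ (fun j => (∑ i ∈ range (j+1), d i)^2) k,
        sum_range_succ (fun j => d j ^ 2) (k+1)]
      set F := ∑ i ∈ range (k+1), d i
      set e := d (k+1)
      have hm : (k:ℝ) + 1 + 1 ≤ m := by exact_mod_cast h
      have hk0 : (0:ℝ) ≤ k := Nat.cast_nonneg k
      push_cast
      generalize (m:ℝ) = M at *
      generalize (k:ℝ) = a at *
      have hu : 0 < (a+1) * (M + 1 - (a+1)) := by apply mul_pos <;> linarith
      have hu' : 0 < (a+1+1) * (M + 1 - (a+1+1)) := by apply mul_pos <;> linarith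
      have h1 : 8 / (M+1)^2 ≤ 2 / ((a+1) * (M + 1 - (a+1))) := by
        have hM : 0 < M + 1 := by linarith
        rw [div_le_div_iff₀ (by positivity) hu]
        nlinarith [sq_nonneg (M + 1 - 2 * (a+1))]
      have h2 : 8 / (M+1)^2 * F^2 ≤ 2 / ((a+1) * (M + 1 - (a+1))) * F^2 := by gcongr
      have h3 : 2 / ((a+1) * (M + 1 - (a+1))) * F^2
          + (M + 1 - 2 * (a + 1 + 1) + 1) / ((a+1+1) * (M + 1 - (a+1+1))) * (F + e)^2
          ≤ (M + 1 - 2 * (a+1) + 1) / ((a+1) * (M + 1 - (a+1))) * F^2 + e^2 := by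
        have hid : (M + 1 - 2 * (a+1) + 1) / ((a+1) * (M + 1 - (a+1))) * F^2 + e^2
          - (2 / ((a+1) * (M + 1 - (a+1))) * F^2
          + (M + 1 - 2 * (a + 1 + 1) + 1) / ((a+1+1) * (M + 1 - (a+1+1))) * (F + e)^2)
          = (((a+1) * (M + 1 - (a+1))) * (F + e) - ((a+1+1) * (M + 1 - (a+1+1))) * F)^2 /
            (((a+1) * (M + 1 - (a+1))) * ((a+1+1) * (M + 1 - (a+1+1)))) := by
          have e1 : a + 1 ≠ 0 := by linarith
          have e2 : M + 1 - (a+1) ≠ 0 := by intro h; rw [h] at hu; simp at hu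
          have e3 : a + 1 + 1 ≠ 0 := by linarith
          have e4 : M + 1 - (a+1+1) ≠ 0 := by intro h; rw [h] at hu'; simp at hu'
          field_simp
          ring
        have : 0 ≤ (((a+1) * (M + 1 - (a+1))) * (F + e) - ((a+1+1) * (M + 1 - (a+1+1))) * F)^2 /
            (((a+1) * (M + 1 - (a+1))) * ((a+1+1) * (M + 1 - (a+1+1)))) := by positivity
        linarith
      rw [mul_add]
      linarith
  rcases m with _ | k
  · simp
    positivity
  · have hk := key k (by omega)
    rw [sum_range_succ] at h0
    rw [sum_range_succ (fun j => (∑ i ∈ range (j+1), d i)^2) k, sum_range_succ (fun j => d j ^ 2) (k+1)]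
    set F := ∑ i ∈ range (k+1), d i
    have he : d (k+1) = -F := by linarith
    rw [he]
    push_cast at hk ⊢
    have hk0 : (0:ℝ) ≤ k := Nat.cast_nonneg k
    generalize (k:ℝ) = a at *
    have h1 : (a + 1 + 1 - 2 * (a+1) + 1) / ((a+1) * (a + 1 + 1 - (a+1))) = 2 / (a+1) - 1 := by
      have : a + 1 ≠ 0 := by linarith
      have h : a + 1 + 1 - (a+1) = 1 := by ring
      rw [h]
      field_simp
      ring
    rw [h1] at hk
    have h2 : 8 / (a+1+1)^2 ≤ 2 / (a+1) := by
      rw [div_le_div_iff₀ (by positivity) (by positivity)]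
      nlinarith [sq_nonneg a]
    have h3 : 8 / (a+1+1)^2 * F^2 ≤ 2 / (a+1) * F^2 := by gcongr
    set Q := ∑ j ∈ range k, (∑ i ∈ range (j+1), d i)^2
    set R := ∑ j ∈ range (k+1), d j ^ 2
    have h4 : 8 / (a+1+1)^2 * (Q + F^2) ≤ R + (-F)^2 := by
      rw [mul_add]; nlinarith
    calc Q + F^2 = (a+1+1)^2/8 * (8 / (a+1+1)^2 * (Q + F^2)) := by field_simp
      _ ≤ _ := by gcongr

/-- Core inequality, sorted version. -/
lemma core_nat (r m : ℕ) (l d : ℕ → ℝ) (g : Fin r → ℕ → ℝ)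
    (hl : ∀ i j, i ≤ j → j ≤ m → l i ≤ l j) (h0 : ∑ j ∈ range (m+1), d j = 0)
    (hc : ∀ k, k < m → 0 < ∑ j ∈ Ico (k+1) (m+1), d j →
      ∃ i, ∃ u, u ≤ m ∧ ∃ v, v ≤ k ∧ k < u ∧ l u - g i u ≤ l v - g i v) :
    ∑ j ∈ range (m+1), l j * d j ≤ ((m:ℝ)+1) / 2 * Real.sqrt (∑ j ∈ range (m+1), d j ^ 2)
      * Real.sqrt (∑ i, ∑ j ∈ range (m+1), g i j ^ 2) := by
  classical
  have abel : ∀ k, ∑ j ∈ range (k+1), l j * d j = l k * ∑ j ∈ range (k+1), d j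
      + ∑ j ∈ range k, (l (j+1) - l j) * (-∑ i ∈ range (j+1), d i) := by
    intro k
    induction k with
    | zero => simp
    | succ k ih =>
      rw [sum_range_succ, ih, sum_range_succ d (k+1),
        sum_range_succ (fun j => (l (j+1) - l j) * (-∑ i ∈ range (j+1), d i)) k]
      ring
  rw [abel m, h0, mul_zero, zero_add]
  set F : ℕ → ℝ := fun k => ∑ i ∈ range (k+1), d i with hF
  set K := (range m).filter (fun k => F k < 0) with hK
  have h1 : ∑ j ∈ range m, (l (j+1) - l j) * (-F j) ≤ ∑ j ∈ K, (l (j+1) - l j) * (-F j) := by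
    rw [← Finset.sum_filter_add_sum_filter_not (range m) (fun k => F k < 0)]
    have : ∑ j ∈ (range m).filter (fun k => ¬ F k < 0), (l (j+1) - l j) * (-F j) ≤ 0 := by
      apply Finset.sum_nonpos
      intro j hj
      simp only [mem_filter, mem_range, not_lt] at hj
      have := hl j (j+1) (by omega) (by omega)
      nlinarith
    linarith
  have h2 : ∑ j ∈ K, (l (j+1) - l j) * (-F j) ≤
      Real.sqrt (∑ j ∈ K, (l (j+1) - l j)^2) * Real.sqrt (∑ j ∈ K, (-F j)^2) :=
    Real.sum_mul_le_sqrt_mul_sqrt _ _ _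
  have h3 : ∑ j ∈ K, (-F j)^2 ≤ ((m:ℝ)+1)^2 / 8 * ∑ j ∈ range (m+1), d j ^ 2 := by
    refine le_trans ?_ (poincare m d h0)
    simp only [neg_sq]
    exact Finset.sum_le_sum_of_subset_of_nonneg (filter_subset _ _) (fun _ _ _ => sq_nonneg _)
  have h4 : ∑ j ∈ K, (l (j+1) - l j)^2 ≤ 2 * ∑ i, ∑ j ∈ range (m+1), g i j ^ 2 := by
    let Q : Fin r → ℕ → Prop := fun i k => ∃ u ∈ range (m+1), ∃ v ∈ range (m+1),
      v ≤ k ∧ k < u ∧ l u - g i u ≤ l v - g i v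
    have hcov : ∀ k ∈ K, ∃ i, Q i k := by
      intro k hk
      have hk' := hk
      simp only [hK, mem_filter, mem_range] at hk'
      have hs := Finset.sum_range_add_sum_Ico d (show k+1 ≤ m+1 by omega)
      obtain ⟨i, u, hu, v, hv, h⟩ := hc k hk'.1 (by
        have := hk'.2
        simp only [hF] at this
        linarith)
      exact ⟨i, u, mem_range.2 (by omega), v, mem_range.2 (by omega), hv, h⟩
    calc ∑ j ∈ K, (l (j+1) - l j)^2
        ≤ ∑ j ∈ K, ∑ i, if Q i j then (l (j+1) - l j)^2 else 0 := by
          apply Finset.sum_le_sum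
          intro j hj
          obtain ⟨i, hi⟩ := hcov j hj
          have := Finset.single_le_sum (f := fun i => if Q i j then (l (j+1) - l j)^2 else 0)
            (fun i _ => by split_ifs <;> positivity) (mem_univ i)
          simpa only [hi, if_true] using this
      _ = ∑ i, ∑ j ∈ K.filter (fun j => Q i j), (l (j+1) - l j)^2 := by
          rw [Finset.sum_comm]
          apply Finset.sum_congr rfl
          intro i _
          exact (Finset.sum_filter (s := K) _ _).symm
      _ ≤ ∑ i, 2 * ∑ j ∈ range (m+1), g i j ^ 2 := by
          apply Finset.sum_le_sum
          intro i _
          apply crossing m l (g i) hl _ (range (m+1)) le_rfl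
          · intro j hj; rw [mem_range] at hj; omega
          · intro k hk
            exact (mem_filter.1 hk).2
      _ = _ := by rw [mul_sum]
  refine h1.trans (h2.trans ?_)
  refine (mul_le_mul (Real.sqrt_le_sqrt h4) (Real.sqrt_le_sqrt h3) (Real.sqrt_nonneg _)
    (Real.sqrt_nonneg _)).trans (le_of_eq ?_)
  rw [← Real.sqrt_mul' _ (by positivity)]
  have hm : ((m:ℝ)+1) / 2 = Real.sqrt ((((m:ℝ)+1) / 2)^2) := (Real.sqrt_sq (by positivity)).symm
  rw [hm, ← Real.sqrt_mul (by positivity), ← Real.sqrt_mul (by positivity)]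
  congr 1
  ring

/-- Core inequality on an arbitrary finite set. -/
lemma core_fin {V : Type*} [Fintype V] [DecidableEq V] (r : ℕ) (l d : V → ℝ) (g : Fin r → V → ℝ)
    (h0 : ∑ v, d v = 0)
    (hc : ∀ S : Finset V, 0 < ∑ v ∈ S, d v →
      ∃ i, ∃ u ∈ S, ∃ v, v ∉ S ∧ l u - g i u ≤ l v - g i v) :
    ∑ v, l v * d v ≤ (Fintype.card V : ℝ) / 2 * Real.sqrt (∑ v, d v ^ 2)
      * Real.sqrt (∑ i, ∑ v, g i v ^ 2) := by
  classical
  rcases Nat.eq_zero_or_pos (Fintype.card V) with hn | hn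
  · have := Fintype.card_eq_zero_iff.1 hn
    simp
  obtain ⟨m, hm⟩ : ∃ m, Fintype.card V = m + 1 := ⟨Fintype.card V - 1, by omega⟩
  obtain ⟨e, he⟩ : ∃ e : Fin (m+1) ≃ V, Monotone (l ∘ e) := by
    let e0 : Fin (m+1) ≃ V := (Fintype.equivFinOfCardEq hm).symm
    exact ⟨(Tuple.sort (l ∘ e0)).trans e0, Tuple.monotone_sort (l ∘ e0)⟩
  let E : ℕ → V := fun j => e (Fin.ofNat (m+1) j)
  have hE : ∀ j : Fin (m+1), E j = e j := by intro j; simp [E]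
  have hsum : ∀ φ : V → ℝ, ∑ v, φ v = ∑ j ∈ range (m+1), φ (E j) := by
    intro φ
    rw [Finset.sum_range (fun j => φ (E j)), ← e.sum_comp]
    simp [hE]
  have hinj : ∀ i j, i ≤ m → j ≤ m → E i = E j → i = j := by
    intro i j hi hj h
    have h1 := hE ⟨i, by omega⟩
    have h2 := hE ⟨j, by omega⟩
    simp only at h1 h2
    rw [h1, h2] at h
    simpa using e.injective h
  have hsurj : ∀ v, ∃ j, j ≤ m ∧ E j = v := by
    intro v
    refine ⟨e.symm v, by have := (e.symm v).2; omega, by rw [hE]; simp⟩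
  have := core_nat r m (l ∘ E) (d ∘ E) (fun i => g i ∘ E) (by
      intro i j hij hj
      have h1 := hE ⟨i, by omega⟩
      have h2 := hE ⟨j, by omega⟩
      simp only at h1 h2
      simp only [Function.comp]
      rw [h1, h2]
      exact he (by simpa using hij)) (by rw [← h0, hsum]; rfl) (by
      intro k hk hpos
      have himg : ∑ v ∈ (Ico (k+1) (m+1)).image E, d v = ∑ j ∈ Ico (k+1) (m+1), d (E j) := by
        apply Finset.sum_image
        intro i hi j hj hij
        simp only [coe_Ico, Set.mem_Ico] at hi hj
        exact hinj i j (by omega) (by omega) hij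
      obtain ⟨i, u, hu, v, hv, h⟩ := hc ((Ico (k+1) (m+1)).image E) (by rw [himg]; exact hpos)
      rw [mem_image] at hu
      obtain ⟨a, ha, rfl⟩ := hu
      obtain ⟨b, hb, rfl⟩ := hsurj v
      rw [mem_Ico] at ha
      refine ⟨i, a, by omega, b, ?_, by omega, h⟩
      by_contra hcon
      exact hv (mem_image_of_mem E (mem_Ico.2 ⟨by omega, by omega⟩)))
  rw [hm, hsum, hsum (fun v => d v ^ 2)]
  simp only [hsum]
  push_cast
  exact this

lemma norm2_eq {ι : Type*} [Fintype ι] (x : ι → ℝ) : norm2 x = ‖(WithLp.toLp 2 x : EuclideanSpace ℝ ι)‖ := by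
  simp [norm2, EuclideanSpace.norm_eq]

lemma norm2_triangle {ι : Type*} [Fintype ι] (x y z : ι → ℝ) :
    norm2 (x - z) ≤ norm2 (x - y) + norm2 (y - z) := by
  simp only [norm2_eq, WithLp.toLp_sub]
  exact norm_sub_le_norm_sub_add_norm_sub _ _ _

lemma quad_nonneg (a b : ℝ) (h : ∀ t : ℝ, 0 ≤ t → t ≤ 1 → 0 ≤ t * a + t^2 * b) : 0 ≤ a := by
  by_contra ha
  push Not at ha
  have hb : 0 < |b| + 1 := by positivity
  have hq : 0 < |b| + 1 + |a| := by positivity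
  have := h (-a / (|b| + 1 + |a|)) (by apply div_nonneg <;> linarith)
    (by rw [div_le_one hq]; linarith [neg_abs_le a])
  set t := -a / (|b| + 1 + |a|) with ht
  have ht0 : 0 < t := by apply div_pos <;> linarith
  have h2 : t * (|b| + 1 + |a|) = -a := by rw [ht]; field_simp
  have h3 : 0 ≤ a + t * b := by
    by_contra hcon
    push Not at hcon
    nlinarith
  nlinarith [le_abs_self b, abs_nonneg a, mul_nonneg ht0.le (abs_nonneg a), mul_nonneg ht0.le (sub_nonneg.2 (le_abs_self b))]

lemma norm2_continuous {ι : Type*} [Fintype ι] : Continuous (norm2 : (ι → ℝ) → ℝ) := by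
  unfold norm2
  fun_prop

lemma norm2_sq {ι : Type*} [Fintype ι] (x : ι → ℝ) : norm2 x ^ 2 = ∑ i, x i ^ 2 :=
  Real.sq_sqrt (Finset.sum_nonneg (fun _ _ => sq_nonneg _))

lemma norm2_nonneg {ι : Type*} [Fintype ι] (x : ι → ℝ) : 0 ≤ norm2 x := Real.sqrt_nonneg _

lemma polytope_compact {V : Type*} [Fintype V] [DecidableEq V] (r : ℕ)
    (f : Fin r → Finset V → ℝ) :
    IsCompact {y : Fin r × V → ℝ | ∀ i, InBasePolytope (f i) (fun v => y (i, v))} := by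
  apply (isCompact_Icc (a := fun e : Fin r × V => f e.1 univ - f e.1 (univ.erase e.2))
    (b := fun e : Fin r × V => f e.1 {e.2})).of_isClosed_subset
  · simp only [InBasePolytope, Set.ofPred_forall, Set.ofPred_and]
    refine isClosed_iInter fun i => IsClosed.inter (isClosed_iInter fun S => ?_) ?_
    · exact isClosed_le (by fun_prop) (by fun_prop)
    · exact isClosed_eq (by fun_prop) (by fun_prop)
  · intro y hy
    refine ⟨?_, ?_⟩
    · rintro ⟨i, v⟩
      have h1 := (hy i).1 (univ.erase v)
      have h2 := (hy i).2
      have h3 := Finset.add_sum_erase univ (fun v => y (i, v)) (mem_univ v)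
      simp only at h1 h2 h3 ⊢
      linarith
    · rintro ⟨i, v⟩
      have h1 := (hy i).1 {v}
      simpa using h1

/-- The quadratic penalty step. -/
lemma penalty {V : Type*} [Fintype V] [DecidableEq V] (r : ℕ)
    (f : Fin r → Finset V → ℝ)
    (hsub : ∀ i, Submodular (f i)) (h0 : ∀ i, f i ∅ = 0)
    (s : V → ℝ) (hs : InBasePolytope (fun S => ∑ i, f i S) s)
    (p : Fin r × V → ℝ) (hp : ∀ i, InBasePolytope (f i) (fun v => p (i, v)))
    (N : ℝ) (hN : 0 < N) :
    ∃ x : Fin r × V → ℝ, (∀ i, InBasePolytope (f i) (fun v => x (i, v))) ∧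
      norm2 (x - p) ≤ (Fintype.card V : ℝ) / 2 * norm2 (fun v => s v - ∑ i, p (i, v)) ∧
      N * norm2 (fun v => s v - ∑ i, x (i, v)) ≤ (Fintype.card V : ℝ) / 2 * norm2 (x - p) := by
  classical
  set P : Set (Fin r × V → ℝ) := {y | ∀ i, InBasePolytope (f i) (fun v => y (i, v))} with hP
  obtain ⟨x, hx, hmin⟩ := (polytope_compact r f).exists_isMinOn ⟨p, hp⟩
    (f := fun x : Fin r × V → ℝ => ∑ e, (x e - p e)^2 + N * ∑ v, (s v - ∑ i, x (i, v))^2)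
    (by fun_prop)
  set d : V → ℝ := fun v => s v - ∑ i, x (i, v) with hd
  have VI : ∀ z ∈ P, 0 ≤ ∑ e, (x e - p e) * (z e - x e)
      - N * ∑ v, d v * ∑ i, (z (i, v) - x (i, v)) := by
    intro z hz
    set b := ∑ e, (z e - x e)^2 + N * ∑ v, (∑ i, (z (i, v) - x (i, v)))^2 with hb
    set a := ∑ e, (x e - p e) * (z e - x e) - N * ∑ v, d v * ∑ i, (z (i, v) - x (i, v)) with ha
    suffices 0 ≤ 2 * a by linarith
    apply quad_nonneg _ b
    intro t ht0 ht1
    have hmem : (fun e => x e + t * (z e - x e)) ∈ P := by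
      intro i
      have hlin : ∀ S : Finset V, ∑ v ∈ S, (x (i, v) + t * (z (i, v) - x (i, v)))
          = (1 - t) * ∑ v ∈ S, x (i, v) + t * ∑ v ∈ S, z (i, v) := by
        intro S
        simp only [mul_sum, ← sum_add_distrib]
        apply sum_congr rfl
        intros; ring
      refine ⟨fun S => ?_, ?_⟩
      · simp only [hlin]
        have h1 := (hx i).1 S
        have h2 := (hz i).1 S
        simp only at h1 h2
        nlinarith
      · simp only [hlin]
        have h1 := (hx i).2
        have h2 := (hz i).2
        simp only at h1 h2
        rw [h1, h2]; ring
    have hm := hmin hmem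
    simp only [Set.mem_ofPred_eq] at hm
    have e1 : ∑ e, (x e + t * (z e - x e) - p e)^2 = ∑ e, (x e - p e)^2
        + t * (2 * ∑ e, (x e - p e) * (z e - x e)) + t^2 * ∑ e, (z e - x e)^2 := by
      simp only [mul_sum, ← sum_add_distrib]
      apply sum_congr rfl
      intros; ring
    have e2 : ∑ v, (s v - ∑ i, (x (i, v) + t * (z (i, v) - x (i, v))))^2 = ∑ v, d v^2
        - t * (2 * ∑ v, d v * ∑ i, (z (i, v) - x (i, v)))
        + t^2 * ∑ v, (∑ i, (z (i, v) - x (i, v)))^2 := by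
      rw [mul_sum, mul_sum, mul_sum, ← sum_sub_distrib, ← sum_add_distrib]
      apply sum_congr rfl
      intro v _
      rw [sum_add_distrib, ← mul_sum]
      simp only [hd]
      ring
    rw [e1, e2] at hm
    simp only [ha, hb]
    linarith
  have hg : Real.sqrt (∑ i, ∑ v, (x (i, v) - p (i, v)) ^ 2) = norm2 (x - p) := by
    simp [norm2, Fintype.sum_prod_type]
  have hcore := core_fin r (fun v => N * d v) d (fun i v => x (i, v) - p (i, v)) (by
      simp only [hd, sum_sub_distrib]
      rw [hs.2, sum_comm, sum_congr rfl (fun i _ => (hx i).2)]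
      simp) (by
      intro S hS
      have hSl : ∃ i, ∑ v ∈ S, x (i, v) < f i S := by
        by_contra hcon
        push Not at hcon
        have h1 := hs.1 S
        simp only [hd, sum_sub_distrib] at hS
        rw [sum_comm] at hS
        have h2 : ∑ i, f i S ≤ ∑ i, ∑ v ∈ S, x (i, v) := sum_le_sum (fun i _ => hcon i)
        linarith
      obtain ⟨i, hi⟩ := hSl
      obtain ⟨u, hu, v, hv, ε, hε, hex⟩ := exists_exchange (f i) (hsub i) (h0 i) _ (hx i) S hi
      refine ⟨i, u, hu, v, hv, ?_⟩
      have hz := VI (fun e => x e + ε * ((if e = (i, u) then 1 else 0) - (if e = (i, v) then 1 else 0))) (by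
        intro j
        by_cases hji : j = i
        · subst hji
          simpa using hex
        · simpa [hji] using hx j)
      have e1 : ∑ e, (x e - p e) * (x e + ε * ((if e = (i, u) then 1 else 0)
          - (if e = (i, v) then 1 else 0)) - x e)
          = ε * ((x (i, u) - p (i, u)) - (x (i, v) - p (i, v))) := by
        have : ∀ e, (x e - p e) * (x e + ε * ((if e = (i, u) then 1 else 0)
          - (if e = (i, v) then 1 else 0)) - x e) = (if e = (i, u) then ε * (x e - p e) else 0)
          - (if e = (i, v) then ε * (x e - p e) else 0) := by
          intro e
          split_ifs <;> ring
        simp only [this, sum_sub_distrib, sum_ite_eq', mem_univ, if_true]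
        ring
      have e2 : ∑ w, d w * ∑ j, (x (j, w) + ε * ((if (j, w) = (i, u) then 1 else 0)
          - (if (j, w) = (i, v) then 1 else 0)) - x (j, w)) = ε * (d u - d v) := by
        have : ∀ w, d w * ∑ j, (x (j, w) + ε * ((if (j, w) = (i, u) then 1 else 0)
          - (if (j, w) = (i, v) then 1 else 0)) - x (j, w)) = (if w = u then ε * d w else 0)
          - (if w = v then ε * d w else 0) := by
          intro w
          have h1 : ∑ j, (x (j, w) + ε * ((if (j, w) = (i, u) then 1 else 0)
            - (if (j, w) = (i, v) then 1 else 0)) - x (j, w)) = ε * ((if w = u then 1 else 0)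
            - (if w = v then 1 else 0)) := by
            simp only [add_sub_cancel_left, ← mul_sum, sum_sub_distrib, Prod.mk.injEq]
            congr 2
            · by_cases h : w = u <;> simp [h]
            · by_cases h : w = v <;> simp [h]
          rw [h1]
          split_ifs <;> ring
        rw [sum_congr rfl (fun w _ => this w)]
        simp only [sum_sub_distrib, sum_ite_eq', mem_univ, if_true]
        ring
      rw [e1, e2] at hz
      have : 0 ≤ ε * (((x (i, u) - p (i, u)) - (x (i, v) - p (i, v))) - N * (d u - d v)) := by
        linarith
      have := nonneg_of_mul_nonneg_right this hε
      linarith)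
  rw [hg] at hcore
  have hdn : Real.sqrt (∑ v, d v ^ 2) = norm2 d := rfl
  rw [hdn] at hcore
  have hsum : ∑ v, N * d v * d v = N * norm2 d ^ 2 := by
    rw [norm2_sq, mul_sum]
    apply sum_congr rfl
    intros; ring
  rw [hsum] at hcore
  have hthird : N * norm2 d ≤ (Fintype.card V : ℝ) / 2 * norm2 (x - p) := by
    rcases (norm2_nonneg d).eq_or_lt with h | h
    · rw [← h, mul_zero]
      have := norm2_nonneg (x - p)
      positivity
    · apply le_of_mul_le_mul_right _ h
      linarith
  refine ⟨x, hx, ?_, hthird⟩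
  have hv := VI p hp
  have e1 : ∑ e, (x e - p e) * (p e - x e) = - norm2 (x - p)^2 := by
    rw [norm2_sq, ← sum_neg_distrib]
    apply sum_congr rfl
    intros; simp only [Pi.sub_apply]; ring
  set q : V → ℝ := fun v => s v - ∑ i, p (i, v) with hq
  have e2 : ∑ v, d v * ∑ i, (p (i, v) - x (i, v)) = norm2 d ^ 2 - ∑ v, d v * q v := by
    rw [norm2_sq, ← sum_sub_distrib]
    apply sum_congr rfl
    intro v _
    simp only [hd, hq, sum_sub_distrib]
    ring
  rw [e1, e2] at hv
  have hcs : ∑ v, d v * q v ≤ norm2 d * norm2 q := Real.sum_mul_le_sqrt_mul_sqrt _ _ _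
  have hq0 := norm2_nonneg q
  have hd0 := norm2_nonneg d
  have h1 : norm2 (x - p)^2 ≤ N * (norm2 d * norm2 q) := by nlinarith [mul_nonneg hN.le (sq_nonneg (norm2 d)), mul_le_mul_of_nonneg_left hcs hN.le]
  have h2 : N * norm2 d * norm2 q ≤ (Fintype.card V : ℝ) / 2 * norm2 (x - p) * norm2 q := by gcongr
  rcases (norm2_nonneg (x - p)).eq_or_lt with h | h
  · rw [← h]; positivity
  · apply le_of_mul_le_mul_right _ h
    nlinarith

/-- The error bound for a point of the product polytope. -/
lemma error_bound {V : Type*} [Fintype V] [DecidableEq V] (r : ℕ)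
    (f : Fin r → Finset V → ℝ)
    (hsub : ∀ i, Submodular (f i)) (h0 : ∀ i, f i ∅ = 0)
    (s : V → ℝ) (hs : InBasePolytope (fun S => ∑ i, f i S) s)
    (p : Fin r × V → ℝ) (hp : ∀ i, InBasePolytope (f i) (fun v => p (i, v))) :
    ∃ x : Fin r × V → ℝ, (∀ i, InBasePolytope (f i) (fun v => x (i, v))) ∧
      (∀ v, ∑ i, x (i, v) = s v) ∧
      norm2 (x - p) ≤ (Fintype.card V : ℝ) / 2 * norm2 (fun v => s v - ∑ i, p (i, v)) := by
  set C := (Fintype.card V : ℝ) / 2 * norm2 (fun v => s v - ∑ i, p (i, v)) with hC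
  have hcpt : IsCompact ({y : Fin r × V → ℝ | ∀ i, InBasePolytope (f i) (fun v => y (i, v))} ∩
      {y | norm2 (y - p) ≤ C}) := by
    apply (polytope_compact r f).inter_right
    exact isClosed_le (norm2_continuous.comp (by fun_prop)) continuous_const
  obtain ⟨x0, hx0, hx0', _⟩ := penalty r f hsub h0 s hs p hp 1 one_pos
  obtain ⟨x, hx, hmin⟩ := hcpt.exists_isMinOn ⟨x0, hx0, hx0'⟩
    (f := fun x : Fin r × V → ℝ => norm2 (fun v => s v - ∑ i, x (i, v)))
    (norm2_continuous.comp (by fun_prop)).continuousOn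
  refine ⟨x, hx.1, ?_, hx.2⟩
  set μ := norm2 (fun v => s v - ∑ i, x (i, v)) with hμ
  have hbound : ∀ N : ℝ, 0 < N → N * μ ≤ (Fintype.card V : ℝ) / 2 * C := by
    intro N hN
    obtain ⟨z, hz, hz', hz''⟩ := penalty r f hsub h0 s hs p hp N hN
    have h1 : μ ≤ norm2 (fun v => s v - ∑ i, z (i, v)) := hmin ⟨hz, hz'⟩
    calc N * μ ≤ N * norm2 (fun v => s v - ∑ i, z (i, v)) := by gcongr
      _ ≤ _ := hz''
      _ ≤ _ := by gcongr
  have hμ0 : μ = 0 := by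
    rcases (norm2_nonneg (fun v => s v - ∑ i, x (i, v))).eq_or_lt with h | h
    · exact h.symm
    · exfalso
      have hμp : 0 < μ := h
      have hC0 : 0 ≤ (Fintype.card V : ℝ) / 2 * C := by
        have := norm2_nonneg (fun v => s v - ∑ i, p (i, v))
        positivity
      have := hbound (((Fintype.card V : ℝ) / 2 * C + 1) / μ) (by positivity)
      rw [div_mul_cancel₀ _ hμp.ne'] at this
      linarith
  have hsq := norm2_sq (fun v => s v - ∑ i, x (i, v))
  rw [← hμ, hμ0] at hsq
  intro v
  have := (Finset.sum_eq_zero_iff_of_nonneg (fun v _ => sq_nonneg (s v - ∑ i, x (i, v)))).1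
    (by simpa using hsq.symm) v (mem_univ v)
  have := pow_eq_zero_iff (two_ne_zero) |>.1 this
  linarith

/-- for every `y ∈ 𝒜' \ E` one has `d(y, E) ≤ (1 + n√r/2) · d(y, 𝒫)`,
i.e. `κ(y) ≤ 1 + n√r/2`. -/
theorem kappa_bound_on_A'
    {V : Type*} [Fintype V] [DecidableEq V] (r : ℕ)
    (f : Fin r → Finset V → ℝ)
    (hsub : ∀ i, Submodular (f i)) (h0 : ∀ i, f i ∅ = 0)
    (sstar : V → ℝ)
    (hsB : InBasePolytope (fun S => ∑ i, f i S) sstar)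
    (hsMin : ∀ z : V → ℝ, InBasePolytope (fun S => ∑ i, f i S) z →
      ∑ v, sstar v ^ 2 ≤ ∑ v, z v ^ 2)
    (P A' E : Set (Fin r × V → ℝ))
    (hP : P = {y | ∀ i, InBasePolytope (f i) (fun v => y (i, v))})
    (hA' : A' = {a | ∀ v, ∑ i, a (i, v) = sstar v})
    (hE : E = {y ∈ P | ∀ v, ∑ i, y (i, v) = sstar v})
    (y : Fin r × V → ℝ) (hyA : y ∈ A') (hyE : y ∉ E) :
    distSet y E ≤ (1 + (Fintype.card V : ℝ) * Real.sqrt r / 2) * distSet y P := by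
  subst hP
  subst hA'
  subst hE
  set P : Set (Fin r × V → ℝ) := {y | ∀ i, InBasePolytope (f i) (fun v => y (i, v))} with hP
  set c := 1 + (Fintype.card V : ℝ) * Real.sqrt r / 2 with hc
  have hc0 : 0 < c := by positivity
  rcases P.eq_empty_or_nonempty with hPe | hPn
  · rw [hPe]
    simp [distSet]
  have key : ∀ p ∈ P, distSet y {y ∈ P | ∀ v, ∑ i, y (i, v) = sstar v} ≤ c * norm2 (y - p) := by
    intro p hp
    obtain ⟨x, hx, hxs, hxp⟩ := error_bound r f hsub h0 sstar hsB p hp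
    have h1 : distSet y {y ∈ P | ∀ v, ∑ i, y (i, v) = sstar v} ≤ norm2 (y - x) := by
      apply csInf_le
      · refine ⟨0, ?_⟩
        rintro _ ⟨z, _, rfl⟩
        exact norm2_nonneg _
      · exact ⟨x, ⟨hx, hxs⟩, rfl⟩
    have h2 := norm2_triangle y p x
    have h3 : norm2 (p - x) = norm2 (x - p) := by
      unfold norm2
      congr 1
      apply sum_congr rfl
      intros; simp only [Pi.sub_apply]; ring
    have h4 : norm2 (fun v => sstar v - ∑ i, p (i, v)) ≤ Real.sqrt r * norm2 (y - p) := by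
      unfold norm2
      rw [← Real.sqrt_mul (by positivity)]
      apply Real.sqrt_le_sqrt
      rw [Fintype.sum_prod_type, sum_comm, mul_sum]
      apply sum_le_sum
      intro v _
      have hyv : ∑ i, y (i, v) = sstar v := hyA v
      simp only [← hyv]
      rw [← sum_sub_distrib]
      have := sq_sum_le_card_mul_sum_sq (s := (univ : Finset (Fin r)))
        (f := fun i => y (i, v) - p (i, v))
      simpa using this
    have h5 : (Fintype.card V : ℝ) / 2 * norm2 (fun v => sstar v - ∑ i, p (i, v))
        ≤ (Fintype.card V : ℝ) / 2 * (Real.sqrt r * norm2 (y - p)) := by gcongr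
    rw [hc]
    linarith
  rw [← div_le_iff₀' hc0]
  apply le_csInf (hPn.image _)
  rintro _ ⟨p, hp, rfl⟩
  rw [div_le_iff₀' hc0]
  exact key p hp
end

section
/- For every y ∈ 𝒫, letting y* be a point of E closest to y in Euclidean norm, one has ‖A(y − y*)‖₂² ≥ (4 / n²) · ‖y − y*‖₂². In other words, the objective (1/2)‖Ay‖₂² of (Prox-DSFM) is restricted ℓ-strongly convex with ℓ = 4/n², so ℓ* ≥ 4/n². -/
open Finset

lemma wirtinger (n : ℕ) (D : ℕ → ℝ) (h0 : D 0 = 0) (hn : D n = 0) :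
    8 / (n : ℝ) ^ 2 * ∑ k ∈ range n, D k ^ 2 ≤ ∑ j ∈ range n, (D (j + 1) - D j) ^ 2 := by
  rcases Nat.lt_or_ge n 2 with h2 | h2
  · have : ∑ k ∈ range n, D k ^ 2 = 0 := by
      interval_cases n <;> simp [h0]
    rw [this, mul_zero]
    exact sum_nonneg fun _ _ => sq_nonneg _
  have hn0 : (0 : ℝ) < n := by exact_mod_cast (by omega : 0 < n)
  have key : ∀ m : ℕ, m + 1 < n →
      8 / (n : ℝ) ^ 2 * ∑ k ∈ range (m + 1), D k ^ 2
        + D (m + 1) ^ 2 * (((n : ℝ) - 2 * (m + 1) + 1) / ((m + 1) * (n - (m + 1))))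
      ≤ ∑ j ∈ range (m + 1), (D (j + 1) - D j) ^ 2 := by
    intro m
    induction m with
    | zero =>
      intro hm
      have : (1 : ℝ) < n := by exact_mod_cast hm
      have h3 : ((n : ℝ) - 2 * (0 + 1) + 1) / ((0 + 1) * (n - (0 + 1))) = 1 := by
        rw [div_eq_one_iff_eq (by nlinarith)]; ring
      simp [h0]
      simp at h3
      rw [h3]; simp
    | succ m ih =>
      intro hm
      have := ih (by omega)
      rw [sum_range_succ _ (m + 1), sum_range_succ _ (m + 1), mul_add]
      set a := D (m + 1)
      set b := D (m + 1 + 1)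
      have hm' : (m : ℝ) + 2 < n := by exact_mod_cast hm
      have hm0 : (0 : ℝ) ≤ m := by positivity
      push_cast
      have hx : 0 < ((m : ℝ) + 1) * (n - (m + 1)) := mul_pos (by linarith) (by linarith)
      have hy : 0 < ((m : ℝ) + 1 + 1) * (n - (m + 1 + 1)) := mul_pos (by linarith) (by linarith)
      have e1 : ((n : ℝ) - 2 * (m + 1) + 1) / ((m + 1) * (n - (m + 1)))
          = -1 + 2 / ((m + 1) * (n - (m + 1)))
            + ((m + 1 + 1) * (n - (m + 1 + 1))) / ((m + 1) * (n - (m + 1))) := by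
        rw [← sub_eq_zero]
        have : (n : ℝ) - (m + 1) ≠ 0 := by linarith
        have : (m : ℝ) + 1 ≠ 0 := by linarith
        field_simp
        ring
      have e2 : ((n : ℝ) - 2 * (m + 1 + 1) + 1) / ((m + 1 + 1) * (n - (m + 1 + 1)))
          = 1 - ((m + 1) * (n - (m + 1))) / ((m + 1 + 1) * (n - (m + 1 + 1))) := by
        rw [eq_sub_iff_add_eq, ← add_div, div_eq_one_iff_eq hy.ne']
        ring
      have e3 : 8 / (n : ℝ) ^ 2 ≤ 2 / ((m + 1) * (n - (m + 1))) := by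
        rw [div_le_div_iff₀ (by positivity) hx]
        nlinarith [sq_nonneg ((n : ℝ) - 2 * (m + 1))]
      rw [e1] at this
      rw [e2]
      generalize ((m : ℝ) + 1) * (n - (m + 1)) = p at *
      generalize ((m : ℝ) + 1 + 1) * (n - (m + 1 + 1)) = q at *
      have e4 : 0 ≤ a ^ 2 * (q / p) + b ^ 2 * (p / q) - 2 * a * b := by
        have : a ^ 2 * (q / p) + b ^ 2 * (p / q) - 2 * a * b = (a * q - b * p) ^ 2 / (p * q) := by
          field_simp
          ring
        rw [this]; positivity
      nlinarith [mul_le_mul_of_nonneg_left e3 (sq_nonneg a)]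
  obtain ⟨m, rfl⟩ : ∃ m, n = m + 2 := ⟨n - 2, by omega⟩
  have := key m (by omega)
  rw [sum_range_succ _ (m + 1), sum_range_succ _ (m + 1), mul_add]
  have hn' : D (m + 1 + 1) = 0 := hn
  rw [hn']
  set a := D (m + 1)
  have hm0 : (0 : ℝ) ≤ m := by positivity
  push_cast at *
  have e1 : ((m : ℝ) + 2 - 2 * (m + 1) + 1) / ((m + 1) * (m + 2 - (m + 1))) 
     = 2 / (m + 1) - 1 := by
    have : ((m : ℝ) + 2 - (m + 1)) = 1 := by ring
    rw [this]
    field_simp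
    ring
  have e3 : 8 / ((m : ℝ) + 2) ^ 2 ≤ 2 / (m + 1) := by
    rw [div_le_div_iff₀ (by positivity) (by positivity)]
    nlinarith [sq_nonneg (m : ℝ)]
  rw [e1] at this
  nlinarith [mul_le_mul_of_nonneg_left e3 (sq_nonneg a)]

lemma analytic (n r : ℕ) (F : Fin r → ℕ → ℝ) (h0 : ∀ i, F i 0 = 0) (hn : ∀ i, F i n = 0)
    (hF : ∀ i k, F i k ≤ 0) :
    4 / (n : ℝ) ^ 2 * ∑ i, ∑ j ∈ range n, (F i (j + 1) - F i j) ^ 2 ≤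
      ∑ j ∈ range n, (∑ i, F i (j + 1) - ∑ i, F i j) ^ 2 := by
  have hw := wirtinger n (fun k => ∑ i, F i k) (by simp [h0]) (by simp [hn])
  have h1 : ∀ i, ∑ j ∈ range n, (F i (j + 1) - F i j) ^ 2 ≤ 2 * ∑ j ∈ range n, F i j ^ 2 := by
    intro i
    have hs : ∑ j ∈ range n, F i (j + 1) ^ 2 = ∑ j ∈ range n, F i j ^ 2 := by
      have a1 := sum_range_succ (fun j => F i j ^ 2) n
      have a2 := sum_range_succ' (fun j => F i j ^ 2) n
      simp only [h0, hn] at a1 a2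
      linarith
    calc _ ≤ ∑ j ∈ range n, (F i (j + 1) ^ 2 + F i j ^ 2) := by
          apply sum_le_sum
          intro j _
          nlinarith [mul_nonneg_of_nonpos_of_nonpos (hF i (j + 1)) (hF i j)]
      _ = _ := by rw [sum_add_distrib, hs]; ring
  have h2 : ∑ i, ∑ j ∈ range n, F i j ^ 2 ≤ ∑ j ∈ range n, (∑ i, F i j) ^ 2 := by
    rw [sum_comm]
    apply sum_le_sum
    intro j _
    have := Finset.sum_sq_le_sq_sum_of_nonneg (s := univ) (f := fun i => - F i j)
      (fun i _ => by simpa using hF i j)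
    simpa using this
  have h3 : ∑ i, ∑ j ∈ range n, (F i (j + 1) - F i j) ^ 2
      ≤ 2 * ∑ j ∈ range n, (∑ i, F i j) ^ 2 := by
    calc _ ≤ ∑ i, 2 * ∑ j ∈ range n, F i j ^ 2 := sum_le_sum fun i _ => h1 i
      _ = 2 * ∑ i, ∑ j ∈ range n, F i j ^ 2 := by rw [mul_sum]
      _ ≤ _ := by linarith
  have h4 : 0 ≤ 4 / (n : ℝ) ^ 2 := by positivity
  calc _ ≤ 4 / (n : ℝ) ^ 2 * (2 * ∑ j ∈ range n, (∑ i, F i j) ^ 2) :=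
        mul_le_mul_of_nonneg_left h3 h4
    _ = 8 / (n : ℝ) ^ 2 * ∑ j ∈ range n, (∑ i, F i j) ^ 2 := by ring
    _ ≤ _ := hw

lemma sum_sq_pos {V : Type*} [Fintype V] [DecidableEq V] {n : ℕ} (e : V ≃ Fin n) (g : V → ℝ) :
    ∑ v, g v ^ 2 = ∑ j ∈ range n, (∑ v with (e v : ℕ) < j + 1, g v
      - ∑ v with (e v : ℕ) < j, g v) ^ 2 := by
  rw [← e.symm.sum_comp, Finset.sum_range]
  apply sum_congr rfl
  intro j _
  have : (univ.filter fun v => (e v : ℕ) < j + 1)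
      = insert (e.symm j) (univ.filter fun v => (e v : ℕ) < j) := by
    ext v
    simp only [mem_filter, mem_univ, true_and, mem_insert, ← e.apply_eq_iff_eq_symm_apply,
      Fin.ext_iff]
    omega
  rw [this, sum_insert (by simp)]
  congr 1
  ring

/-- tight sets are closed under union and intersection -/
lemma tight_union_inter {V : Type*} [Fintype V] [DecidableEq V] (g : Finset V → ℝ)
    (hg : Submodular g) (x : V → ℝ) (hx : InBasePolytope g x) (S T : Finset V)
    (hS : ∑ v ∈ S, x v = g S) (hT : ∑ v ∈ T, x v = g T) :
    ∑ v ∈ S ∪ T, x v = g (S ∪ T) ∧ ∑ v ∈ S ∩ T, x v = g (S ∩ T) := by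
  have h1 := sum_union_inter (s₁ := S) (s₂ := T) (f := x)
  have h2 := hg S T
  have h3 := hx.1 (S ∪ T)
  have h4 := hx.1 (S ∩ T)
  constructor <;> linarith

lemma tight_separate {V : Type*} [Fintype V] [DecidableEq V] (g : Finset V → ℝ)
    (hg : Submodular g) (hg0 : g ∅ = 0) (x : V → ℝ) (hx : InBasePolytope g x) (A B : Finset V)
    (h : ∀ v ∈ A, ∀ u ∈ B, ∃ S : Finset V, ∑ w ∈ S, x w = g S ∧ v ∈ S ∧ u ∉ S) :
    ∃ T : Finset V, ∑ w ∈ T, x w = g T ∧ A ⊆ T ∧ ∀ u ∈ B, u ∉ T := by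
  have h1 : ∀ v ∈ A, ∃ S : Finset V, ∑ w ∈ S, x w = g S ∧ v ∈ S ∧ ∀ u ∈ B, u ∉ S := by
    intro v hv
    replace h := h v hv
    clear hv
    induction B using Finset.induction_on with
    | empty => exact ⟨univ, hx.2, mem_univ _, by simp⟩
    | insert b B hb ih =>
      obtain ⟨S, h1, h2, h3⟩ := ih
        (fun u hu => h u (mem_insert_of_mem hu))
      obtain ⟨T, k1, k2, k3⟩ := h b (mem_insert_self _ _)
      exact ⟨S ∩ T, (tight_union_inter g hg x hx S T h1 k1).2, by simp [h2, k2], by grind⟩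
  clear h
  induction A using Finset.induction_on with
  | empty => exact ⟨∅, by simp [hg0], by simp, by simp⟩
  | insert b A hb ih =>
    obtain ⟨S, k1, k2, k3⟩ := ih (fun v hv => h1 v (mem_insert_of_mem hv))
    obtain ⟨T, l1, l2, l3⟩ := h1 b (mem_insert_self _ _)
    exact ⟨S ∪ T, (tight_union_inter g hg x hx S T k1 l1).1, by grind, by grind⟩

/-- if no admissible exchange enters `L`, then `y - x` has nonpositive sum on `L`. -/
lemma lower_nonpos {V : Type*} [Fintype V] [DecidableEq V] (g : Finset V → ℝ)
    (hg : Submodular g) (hg0 : g ∅ = 0) (x y : V → ℝ) (hx : InBasePolytope g x)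
    (hy : InBasePolytope g y) (L : Finset V)
    (h : ∀ v ∈ L, ∀ u ∉ L, y u - x u < 0 → 0 < y v - x v →
      ∃ S : Finset V, ∑ w ∈ S, x w = g S ∧ v ∈ S ∧ u ∉ S) :
    ∑ v ∈ L, (y v - x v) ≤ 0 := by
  obtain ⟨T, hT, hA, hB⟩ := tight_separate g hg hg0 x hx (L.filter fun v => 0 < y v - x v)
    (Lᶜ.filter fun u => y u - x u < 0) (by
      intro v hv u hu
      simp only [mem_filter, mem_compl] at hv hu
      exact h v hv.1 u hu.1 hu.2 hv.2)
  have h1 : ∑ v ∈ T, (y v - x v) ≤ 0 := by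
    rw [sum_sub_distrib, hT]; linarith [hy.1 T]
  calc ∑ v ∈ L, (y v - x v) = ∑ v, if v ∈ L then y v - x v else 0 := by simp
    _ ≤ ∑ v, if v ∈ T then y v - x v else 0 := by
      apply sum_le_sum
      intro v _
      by_cases hL : v ∈ L <;> by_cases hv : v ∈ T <;> simp only [hL, hv, if_true, if_false]
      · exact le_refl _
      · by_contra hc
        push Not at hc
        exact hv (hA (by simp [hL]; linarith))
      · by_contra hc
        push Not at hc
        exact hB v (by simp [hL]; linarith) hv
      · exact le_refl _
    _ = ∑ v ∈ T, (y v - x v) := by simp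
    _ ≤ 0 := h1

/-- No admissible direction with zero image improves the closest point. -/
lemma no_improve {V : Type*} [Fintype V] [DecidableEq V] (r : ℕ)
    (f : Fin r → Finset V → ℝ) (sstar : V → ℝ) (y x : Fin r × V → ℝ)
    (hx : ∀ i, InBasePolytope (f i) (fun v => x (i, v)))
    (hxs : ∀ v, ∑ i, x (i, v) = sstar v)
    (hc : ∀ z : Fin r × V → ℝ, (∀ i, InBasePolytope (f i) (fun v => z (i, v))) →
      (∀ v, ∑ i, z (i, v) = sstar v) → ∑ p, (y p - x p) ^ 2 ≤ ∑ p, (y p - z p) ^ 2)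
    (δ : Fin r × V → ℝ) (hδ0 : ∀ i, ∑ v, δ (i, v) = 0)
    (hδ : ∀ i (S : Finset V), ∑ v ∈ S, x (i, v) = f i S → ∑ v ∈ S, δ (i, v) ≤ 0)
    (hA : ∀ v, ∑ i, δ (i, v) = 0) :
    ∑ p, (y p - x p) * δ p ≤ 0 := by
  by_contra hpos
  push Not at hpos
  have hev : ∀ᶠ ε : ℝ in nhdsWithin 0 (Set.Ioi 0), ∀ i (S : Finset V),
      ∑ v ∈ S, x (i, v) + ε * ∑ v ∈ S, δ (i, v) ≤ f i S := by
    rw [Filter.eventually_all]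
    intro i
    rw [Filter.eventually_all]
    intro S
    rcases eq_or_lt_of_le ((hx i).1 S) with h | h
    · filter_upwards [self_mem_nhdsWithin] with ε hε
      have := hδ i S h
      have hε' : (0 : ℝ) < ε := hε
      have h' : ∑ v ∈ S, x (i, v) = f i S := h
      nlinarith
    · have hcont : Continuous fun ε : ℝ => ∑ v ∈ S, x (i, v) + ε * ∑ v ∈ S, δ (i, v) := by
        fun_prop
      have := (hcont.tendsto 0).eventually_lt_const (u := f i S) (by simpa using h)
      exact (this.filter_mono nhdsWithin_le_nhds).mono fun _ h => h.le
  have hev2 : ∀ᶠ ε : ℝ in nhdsWithin 0 (Set.Ioi 0),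
      ε * ∑ p, δ p ^ 2 < 2 * ∑ p, (y p - x p) * δ p := by
    have hcont : Continuous fun ε : ℝ => ε * ∑ p, δ p ^ 2 := by fun_prop
    have := (hcont.tendsto 0).eventually_lt_const
      (u := 2 * ∑ p, (y p - x p) * δ p) (by simpa using hpos)
    exact this.filter_mono nhdsWithin_le_nhds
  obtain ⟨ε, ⟨h1, h2⟩, h3⟩ := ((hev.and hev2).and self_mem_nhdsWithin).exists
  have hε : (0 : ℝ) < ε := h3
  have := hc (fun p => x p + ε * δ p) (fun i => ⟨fun S => by
      simpa [sum_add_distrib, ← mul_sum] using h1 i S, by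
      have := (hx i).2
      simp only [sum_add_distrib, ← mul_sum, hδ0, mul_zero, add_zero]
      exact this⟩) (fun v => by
      simp only [sum_add_distrib, ← mul_sum, hA, mul_zero, add_zero, hxs])
  have hexp : ∑ p, (y p - (x p + ε * δ p)) ^ 2
      = ∑ p, (y p - x p) ^ 2 - ε * (2 * ∑ p, (y p - x p) * δ p - ε * ∑ p, δ p ^ 2) := by
    simp only [mul_sum, ← sum_sub_distrib]
    apply sum_congr rfl
    intro p _
    ring
  rw [hexp] at this
  nlinarith [mul_pos hε (sub_pos.2 h2)]

lemma exists_order {V : Type*} [Fintype V] (R : V → V → Prop)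
    (hR : ∀ v, ¬ Relation.TransGen R v v) :
    ∃ e : V ≃ Fin (Fintype.card V), ∀ u v, R u v → e u ≤ e v := by
  classical
  have hpo : IsPartialOrder V (Relation.ReflTransGen R) :=
    { refl := fun _ => Relation.ReflTransGen.refl
      trans := fun _ _ _ => Relation.ReflTransGen.trans
      antisymm := fun a b hab hba => by
        rcases Relation.reflTransGen_iff_eq_or_transGen.1 hab with h | h
        · exact h.symm
        · exact absurd (h.trans_left hba) (hR a) }
  obtain ⟨s, hs, hle⟩ := extend_partialOrder (Relation.ReflTransGen R)
  let _ : LinearOrder V :=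
    { le := s
      le_refl := hs.refl
      le_trans := hs.trans
      le_antisymm := hs.antisymm
      le_total := hs.total
      toDecidableLE := Classical.decRel _ }
  refine ⟨(monoEquivOfFin V rfl).symm.toEquiv, fun u v h => ?_⟩
  have : u ≤ v := hle _ _ (Relation.ReflTransGen.single h)
  exact (monoEquivOfFin V rfl).symm.monotone this

/-- Theorem 4.1, bound on `ℓ*`: for every `y ∈ 𝒫` and `y*` a closest
point of `E` to `y`, `‖A(y - y*)‖₂² ≥ (4/n²) ‖y - y*‖₂²`; i.e. the (Prox-DSFM)
objective is restricted `4/n²`-strongly convex. -/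
theorem restricted_strong_convexity
    {V : Type*} [Fintype V] [DecidableEq V] (r : ℕ)
    (f : Fin r → Finset V → ℝ)
    (hsub : ∀ i, Submodular (f i)) (h0 : ∀ i, f i ∅ = 0)
    (sstar : V → ℝ)
    (hsB : InBasePolytope (fun S => ∑ i, f i S) sstar)
    (hsMin : ∀ z : V → ℝ, InBasePolytope (fun S => ∑ i, f i S) z →
      ∑ v, sstar v ^ 2 ≤ ∑ v, z v ^ 2)
    (P E : Set (Fin r × V → ℝ))
    (hP : P = {y | ∀ i, InBasePolytope (f i) (fun v => y (i, v))})
    (hE : E = {y ∈ P | ∀ v, ∑ i, y (i, v) = sstar v})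
    (y ystar : Fin r × V → ℝ) (hyP : y ∈ P) (hyE : ystar ∈ E)
    (hclosest : ∀ z ∈ E, norm2 (y - ystar) ≤ norm2 (y - z)) :
    ∑ v, ((∑ i, y (i, v)) - ∑ i, ystar (i, v)) ^ 2 ≥
      (4 / (Fintype.card V : ℝ) ^ 2) * ∑ p, (y p - ystar p) ^ 2 := by
  classical
  subst hP
  subst hE
  obtain ⟨hxP, hxs⟩ := hyE
  have hxP' : ∀ i, InBasePolytope (f i) (fun v => ystar (i, v)) := hxP
  have hyP' : ∀ i, InBasePolytope (f i) (fun v => y (i, v)) := hyP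
  have hc : ∀ z : Fin r × V → ℝ, (∀ i, InBasePolytope (f i) (fun v => z (i, v))) →
      (∀ v, ∑ i, z (i, v) = sstar v) →
      ∑ p, (y p - ystar p) ^ 2 ≤ ∑ p, (y p - z p) ^ 2 := by
    intro z h1 h2
    have := hclosest z ⟨h1, h2⟩
    unfold norm2 at this
    rw [Real.sqrt_le_sqrt_iff (sum_nonneg fun _ _ => sq_nonneg _)] at this
    simpa using this
  let R : V → V → Prop := fun u v => ∃ i, y (i, u) - ystar (i, u) < 0 ∧
    0 < y (i, v) - ystar (i, v) ∧
    ∀ S : Finset V, ∑ w ∈ S, ystar (i, w) = f i S → v ∈ S → u ∈ S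
  have hdir : ∀ u v, Relation.TransGen R u v → ∃ δ : Fin r × V → ℝ,
      (∀ i, ∑ w, δ (i, w) = 0) ∧
      (∀ i (S : Finset V), ∑ w ∈ S, ystar (i, w) = f i S → ∑ w ∈ S, δ (i, w) ≤ 0) ∧
      (∀ w, ∑ i, δ (i, w) = (if w = v then 1 else 0) - (if w = u then 1 else 0)) ∧
      0 < ∑ p, (y p - ystar p) * δ p := by
    have harc : ∀ u v, R u v → ∃ δ : Fin r × V → ℝ,
      (∀ i, ∑ w, δ (i, w) = 0) ∧
      (∀ i (S : Finset V), ∑ w ∈ S, ystar (i, w) = f i S → ∑ w ∈ S, δ (i, w) ≤ 0) ∧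
      (∀ w, ∑ i, δ (i, w) = (if w = v then 1 else 0) - (if w = u then 1 else 0)) ∧
      0 < ∑ p, (y p - ystar p) * δ p := by
      rintro u v ⟨i, hu, hv, hS⟩
      refine ⟨fun p => if p.1 = i then (if p.2 = v then 1 else 0) - (if p.2 = u then 1 else 0)
        else 0, ?_, ?_, ?_, ?_⟩
      · intro j
        by_cases hj : j = i <;> simp [hj]
      · intro j S hT
        by_cases hj : j = i
        · subst hj
          have := hS S hT
          by_cases hvS : v ∈ S
          · simp [hvS, this hvS]
          · by_cases huS : u ∈ S <;> simp [hvS, huS]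
        · simp [hj]
      · intro w
        simp
      · rw [Fintype.sum_prod_type]
        rw [Finset.sum_eq_single i (by intro j _ hj; simp [hj]) (by simp)]
        simp [mul_sub]
        linarith
    intro u v h
    induction h with
    | single h => exact harc _ _ h
    | tail _ h ih =>
      obtain ⟨δ, a1, a2, a3, a4⟩ := ih
      obtain ⟨η, b1, b2, b3, b4⟩ := harc _ _ h
      refine ⟨δ + η, ?_, ?_, ?_, ?_⟩
      · intro i; simp [sum_add_distrib, a1, b1]
      · intro i S hS
        simp only [Pi.add_apply, sum_add_distrib]
        linarith [a2 i S hS, b2 i S hS]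
      · intro w
        simp only [Pi.add_apply, sum_add_distrib, a3, b3]
        ring
      · simp only [Pi.add_apply, mul_add, sum_add_distrib]
        linarith
  obtain ⟨e, he⟩ := exists_order R (by
    intro v hv
    obtain ⟨δ, a1, a2, a3, a4⟩ := hdir v v hv
    have := no_improve r f sstar y ystar hxP' hxs hc δ a1 a2 (by intro w; rw [a3]; ring)
    linarith)
  have hmain := analytic (Fintype.card V) r
    (fun i k => ∑ v with (e v : ℕ) < k, (y (i, v) - ystar (i, v)))
    (by intro i; simp)
    (by
      intro i
      have h1 := (hxP' i).2
      have h2 := (hyP' i).2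
      simp only [Fin.is_lt, filter_true, sum_sub_distrib]
      linarith)
    (by
      intro i k
      refine lower_nonpos (f i) (hsub i) (h0 i) (fun v => ystar (i, v)) (fun v => y (i, v))
        (hxP' i) (hyP' i) _ ?_
      intro v hv u hu hun hvp
      by_contra hno
      push Not at hno
      have hR : R u v := ⟨i, hun, hvp, hno⟩
      have hle : (e u : ℕ) ≤ e v := he u v hR
      simp only [mem_filter, mem_univ, true_and] at hv hu
      omega)
  have hL : ∑ p, (y p - ystar p) ^ 2 = ∑ i, ∑ v, (y (i, v) - ystar (i, v)) ^ 2 :=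
    Fintype.sum_prod_type _
  have hRR : ∑ v, ((∑ i, y (i, v)) - ∑ i, ystar (i, v)) ^ 2
      = ∑ v, (∑ i, (y (i, v) - ystar (i, v))) ^ 2 := by
    simp only [sum_sub_distrib]
  rw [ge_iff_le, hL, hRR, sum_sq_pos e]
  simp only [sum_sq_pos e]
  refine hmain.trans (le_of_eq ?_)
  apply sum_congr rfl
  intro j _
  rw [sum_comm, sum_comm (s := univ.filter fun v => (e v : ℕ) < j)]
end

section
/- The set E = {y ∈ 𝒫 : Ay = s*} is nonempty. -/
open Finset

/-- Greedy vector of `g` with respect to a linear order. -/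
noncomputable def greedyVec {V : Type*} [Fintype V] [LinearOrder V] (g : Finset V → ℝ) (v : V) : ℝ :=
  g (univ.filter (fun u => u ≤ v)) - g (univ.filter (fun u => u < v))

lemma greedy_le {V : Type*} [Fintype V] [LinearOrder V] (g : Finset V → ℝ)
    (hg : Submodular g) (h0 : g ∅ = 0) (S : Finset V) : ∑ v ∈ S, greedyVec g v ≤ g S := by
  induction S using Finset.induction_on_max with
  | empty => simp [h0]
  | insert a S ha ih =>
    have hn : a ∉ S := fun h => lt_irrefl _ (ha a h)
    rw [Finset.sum_insert hn]
    have h := hg (insert a S) (univ.filter (fun u => u < a))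
    have h1 : insert a S ∪ univ.filter (fun u => u < a) = univ.filter (fun u => u ≤ a) := by
      ext x
      simp only [mem_union, mem_insert, mem_filter, mem_univ, true_and]
      constructor
      · rintro ((h | h) | h)
        · exact h.le
        · exact (ha x h).le
        · exact h.le
      · intro h
        rcases h.eq_or_lt with h | h
        · exact Or.inl (Or.inl h)
        · exact Or.inr h
    have h2 : insert a S ∩ univ.filter (fun u => u < a) = S := by
      ext x
      simp only [mem_inter, mem_insert, mem_filter, mem_univ, true_and]
      constructor
      · rintro ⟨h | h, h'⟩
        · exact absurd h h'.ne
        · exact h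
      · intro h
        exact ⟨Or.inr h, ha x h⟩
    rw [h1, h2] at h
    unfold greedyVec at *
    linarith

lemma lower_step {V : Type*} [Fintype V] [LinearOrder V] (a : V) (S : Finset V)
    (ha : ∀ x ∈ S, x < a) (hl : ∀ x ∈ insert a S, ∀ y, y ≤ x → y ∈ insert a S) :
    S = univ.filter (fun u => u < a) ∧ insert a S = univ.filter (fun u => u ≤ a) ∧
    (∀ x ∈ S, ∀ y, y ≤ x → y ∈ S) := by
  have key : ∀ y, y < a → y ∈ S := fun y hy =>
    (mem_insert.1 (hl a (mem_insert_self _ _) y hy.le)).resolve_left hy.ne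
  refine ⟨?_, ?_, fun x hx y hy => key y (hy.trans_lt (ha x hx))⟩
  · ext x
    simp only [mem_filter, mem_univ, true_and]
    exact ⟨ha x, key x⟩
  · ext x
    simp only [mem_filter, mem_univ, true_and]
    constructor
    · intro h
      rcases mem_insert.1 h with h | h
      · exact h.le
      · exact (ha x h).le
    · exact hl a (mem_insert_self _ _) x

lemma greedy_eq {V : Type*} [Fintype V] [LinearOrder V] (g : Finset V → ℝ)
    (h0 : g ∅ = 0) (S : Finset V) (hl : ∀ x ∈ S, ∀ y, y ≤ x → y ∈ S) :
    ∑ v ∈ S, greedyVec g v = g S := by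
  induction S using Finset.induction_on_max with
  | empty => simp [h0]
  | insert a S ha ih =>
    have hn : a ∉ S := fun h => lt_irrefl _ (ha a h)
    obtain ⟨h1, h2, h3⟩ := lower_step a S ha hl
    rw [Finset.sum_insert hn, ih h3, greedyVec, ← h1, ← h2]
    ring

lemma abel_nonneg {V : Type*} [Fintype V] [LinearOrder V] (w d : V → ℝ) (hw : Antitone w)
    (hd : ∀ S : Finset V, (∀ x ∈ S, ∀ y, y ≤ x → y ∈ S) → 0 ≤ ∑ v ∈ S, d v)
    (S : Finset V) (hl : ∀ x ∈ S, ∀ y, y ≤ x → y ∈ S) (c : ℝ) (hc : ∀ x ∈ S, c ≤ w x) :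
    0 ≤ ∑ v ∈ S, (w v - c) * d v := by
  induction S using Finset.induction_on_max generalizing c with
  | empty => simp
  | insert a S ha ih =>
    have hn : a ∉ S := fun h => lt_irrefl _ (ha a h)
    obtain ⟨-, -, h3⟩ := lower_step a S ha hl
    have i1 := ih h3 (w a) (fun x hx => hw (ha x hx).le)
    have i2 := mul_nonneg (sub_nonneg.2 (hc a (mem_insert_self _ _))) (hd _ hl)
    rw [Finset.sum_insert hn] at i2 ⊢
    have : ∑ v ∈ S, (w v - c) * d v = ∑ v ∈ S, (w v - w a) * d v + (w a - c) * ∑ v ∈ S, d v := by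
      rw [Finset.mul_sum, ← Finset.sum_add_distrib]
      exact Finset.sum_congr rfl fun _ _ => by ring
    rw [this]
    linarith

lemma greedy_main {V : Type*} [Fintype V] [LinearOrder V] (r : ℕ) (f : Fin r → Finset V → ℝ)
    (hsub : ∀ i, Submodular (f i)) (h0 : ∀ i, f i ∅ = 0) (s : V → ℝ)
    (hsB : InBasePolytope (fun S => ∑ i, f i S) s) (w : V → ℝ) (hw : Antitone w) :
    ∃ y : Fin r → V → ℝ, (∀ i, InBasePolytope (f i) (y i)) ∧
      ∑ v, w v * s v ≤ ∑ v, w v * ∑ i, y i v := by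
  have huniv : ∀ x ∈ (univ : Finset V), ∀ y, y ≤ x → y ∈ (univ : Finset V) := by simp
  refine ⟨fun i => greedyVec (f i), fun i => ⟨greedy_le _ (hsub i) (h0 i),
    greedy_eq _ (h0 i) _ huniv⟩, ?_⟩
  have hS : ∀ S : Finset V, (∀ x ∈ S, ∀ y, y ≤ x → y ∈ S) →
      ∑ v ∈ S, (∑ i, greedyVec (f i) v - s v) = ∑ i, f i S - ∑ v ∈ S, s v := by
    intro S hl
    rw [Finset.sum_sub_distrib, Finset.sum_comm]
    congr 1
    exact Finset.sum_congr rfl fun i _ => greedy_eq _ (h0 i) S hl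
  obtain ⟨c, hc⟩ : ∃ c, ∀ x, c ≤ w x := by
    obtain ⟨c, hc⟩ := (Set.finite_range w).bddBelow
    exact ⟨c, fun x => hc ⟨x, rfl⟩⟩
  have h := abel_nonneg w (fun v => ∑ i, greedyVec (f i) v - s v) hw
    (fun S hl => by rw [hS S hl]; exact sub_nonneg.2 (hsB.1 S)) univ huniv c (fun x _ => hc x)
  have hz : ∑ v, (∑ i, greedyVec (f i) v - s v) = 0 := by
    rw [hS univ huniv]; exact sub_eq_zero.2 hsB.2.symm
  have e : ∑ v, (w v - c) * (∑ i, greedyVec (f i) v - s v) =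
      ∑ v, w v * ∑ i, greedyVec (f i) v - ∑ v, w v * s v
        - c * ∑ v, (∑ i, greedyVec (f i) v - s v) := by
    rw [Finset.mul_sum, ← Finset.sum_sub_distrib, ← Finset.sum_sub_distrib]
    exact Finset.sum_congr rfl fun _ _ => by ring
  rw [e, hz] at h
  linarith

lemma greedy_any {V : Type*} [Fintype V] [inst : DecidableEq V] (r : ℕ)
    (f : Fin r → Finset V → ℝ)
    (hsub : ∀ i, Submodular (f i)) (h0 : ∀ i, f i ∅ = 0) (s : V → ℝ)
    (hsB : InBasePolytope (fun S => ∑ i, f i S) s) (w : V → ℝ) :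
    ∃ y : Fin r → V → ℝ, (∀ i, InBasePolytope (f i) (y i)) ∧
      ∑ v, w v * s v ≤ ∑ v, w v * ∑ i, y i v := by
  let φ : V → ℝ ×ₗ Fin (Fintype.card V) := fun v => toLex (- w v, Fintype.equivFin V v)
  have hφ : Function.Injective φ := by
    intro a b h
    have := congrArg (fun p => (ofLex p).2) h
    exact (Fintype.equivFin V).injective this
  letI L : LinearOrder V := LinearOrder.lift' φ hφ
  have hw : Antitone w := by
    intro a b h
    have h' : φ a ≤ φ b := h
    rcases Prod.Lex.le_iff.1 h' with h | h
    · have : - w a < - w b := h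
      linarith
    · have : - w a = - w b := h.1
      linarith
  refine greedy_main r f ?_ h0 s hsB w hw
  intro i
  convert hsub i

lemma base_compact {V : Type*} [Fintype V] [DecidableEq V] (g : Finset V → ℝ) :
    IsCompact {x : V → ℝ | InBasePolytope g x} := by
  have hc : IsClosed {x : V → ℝ | InBasePolytope g x} := by
    unfold InBasePolytope
    rw [Set.setOf_and, Set.setOf_forall]
    refine IsClosed.inter (isClosed_iInter fun S => isClosed_le (by fun_prop) (by fun_prop))
      (isClosed_eq (by fun_prop) (by fun_prop))
  refine (isCompact_Icc (a := fun v => g univ - g (univ.erase v))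
    (b := fun v => g {v})).of_isClosed_subset hc ?_
  intro x hx
  refine ⟨fun v => ?_, fun v => ?_⟩
  · have h1 := hx.1 (univ.erase v)
    have h2 := hx.2
    rw [← Finset.add_sum_erase _ _ (mem_univ v)] at h2
    show g univ - g (univ.erase v) ≤ x v
    linarith
  · simpa using hx.1 {v}

lemma base_convex {V : Type*} [Fintype V] (g : Finset V → ℝ) :
    Convex ℝ {x : V → ℝ | InBasePolytope g x} := by
  intro x hx y hy a b ha hb hab
  have e : ∀ S : Finset V, ∑ v ∈ S, (a • x + b • y) v = a * ∑ v ∈ S, x v + b * ∑ v ∈ S, y v := by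
    intro S
    simp [Finset.sum_add_distrib, Finset.mul_sum]
  refine ⟨fun S => ?_, ?_⟩
  · rw [e]
    have h1 := mul_le_mul_of_nonneg_left (hx.1 S) ha
    have h2 := mul_le_mul_of_nonneg_left (hy.1 S) hb
    have : g S = a * g S + b * g S := by rw [← add_mul, hab, one_mul]
    linarith
  · rw [e, hx.2, hy.2, ← add_mul, hab, one_mul]

/-- the set `E = {y ∈ 𝒫 : Ay = s*}` is nonempty. -/
theorem E_nonempty
    {V : Type*} [Fintype V] [DecidableEq V] (r : ℕ)
    (f : Fin r → Finset V → ℝ)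
    (hsub : ∀ i, Submodular (f i)) (h0 : ∀ i, f i ∅ = 0)
    (sstar : V → ℝ)
    (hsB : InBasePolytope (fun S => ∑ i, f i S) sstar)
    (hsMin : ∀ z : V → ℝ, InBasePolytope (fun S => ∑ i, f i S) z →
      ∑ v, sstar v ^ 2 ≤ ∑ v, z v ^ 2) :
    ∃ y : Fin r × V → ℝ,
      (∀ i, InBasePolytope (f i) (fun v => y (i, v))) ∧
      ∀ v, ∑ i, y (i, v) = sstar v := by
  classical
  let P : Set (Fin r → V → ℝ) := Set.univ.pi fun i => {x | InBasePolytope (f i) x}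
  let A : (Fin r → V → ℝ) →ₗ[ℝ] (V → ℝ) := ∑ i, LinearMap.proj i
  have hA : ∀ y v, A y v = ∑ i, y i v := by
    intro y v
    simp [A, LinearMap.sum_apply]
  have hPc : IsCompact P := isCompact_univ_pi fun i => base_compact (f i)
  have hPx : Convex ℝ P := convex_pi fun i _ => base_convex (f i)
  have hAc : IsCompact (A '' P) := hPc.image A.continuous_of_finiteDimensional
  have hAx : Convex ℝ (A '' P) := hPx.linear_image A
  by_cases hs : sstar ∈ A '' P
  · obtain ⟨y, hy, hys⟩ := hs
    refine ⟨fun p => y p.1 p.2, fun i => hy i (Set.mem_univ i), fun v => ?_⟩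
    rw [← hys, hA]
  · exfalso
    obtain ⟨l, u, hl, hu⟩ := geometric_hahn_banach_closed_point hAx hAc.isClosed hs
    have hlw : ∀ x : V → ℝ, l x = ∑ v, l (Pi.single v 1) * x v := by
      intro x
      have h := LinearMap.pi_apply_eq_sum_univ l.toLinearMap x
      have e : ∀ v : V, (fun j => if v = j then (1 : ℝ) else 0) = Pi.single v 1 := by
        intro v
        ext j
        simp [Pi.single_apply, eq_comm]
      simp only [e, smul_eq_mul] at h
      rw [show l x = l.toLinearMap x from rfl, h]
      exact Finset.sum_congr rfl fun _ _ => mul_comm _ _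
    obtain ⟨y, hy, hle⟩ := greedy_any r f hsub h0 sstar hsB (fun v => l (Pi.single v 1))
    have h1 := hl (A y) ⟨y, fun i _ => hy i, rfl⟩
    rw [hlw] at h1 hu
    simp only [hA] at h1
    linarith
end

section
/- Let 𝒜 = {a ∈ ℝ^{rn} : Aa = 0}. A pair (a, y) ∈ 𝒜 × 𝒫 minimizes ‖a − y‖₂² over 𝒜 × 𝒫 if and only if Ay = s* and a is the orthogonal projection of y onto 𝒜 (namely a_i = y_i − (Ay)/r for each i). In particular, the y-components of optimal solutions of (Best-Approx) are exactly the points of E = {y ∈ 𝒫 : Ay = s*}. -/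
open Finset

/-- Initial segment of a ranking. -/
def seg {V : Type*} [Fintype V] (ρ : V → ℕ) (k : ℕ) : Finset V :=
  Finset.univ.filter (fun v => ρ v < k)

/-- Greedy vector for a ranking. -/
def greedy {V : Type*} [Fintype V] (ρ : V → ℕ) (g : Finset V → ℝ) (v : V) : ℝ :=
  g (seg ρ (ρ v + 1)) - g (seg ρ (ρ v))

lemma seg_step {V : Type*} [Fintype V] [DecidableEq V] (ρ : V → ℕ)
    (hρ : Function.Injective ρ) (k : ℕ) :
    seg ρ (k + 1) = seg ρ k ∨
      ∃ u, ρ u = k ∧ u ∉ seg ρ k ∧ seg ρ (k + 1) = insert u (seg ρ k) := by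
  by_cases h : ∃ u, ρ u = k
  · right
    obtain ⟨u, hu⟩ := h
    refine ⟨u, hu, by simp [seg, hu], ?_⟩
    ext v
    simp only [seg, Finset.mem_filter, Finset.mem_univ, true_and, Finset.mem_insert]
    constructor
    · intro hv
      by_cases h2 : ρ v = k
      · left; exact hρ (h2.trans hu.symm)
      · right; omega
    · rintro (rfl | hv) <;> omega
  · left
    push Not at h
    ext v
    have := h v
    simp only [seg, Finset.mem_filter, Finset.mem_univ, true_and]
    omega

lemma seg_top {V : Type*} [Fintype V] (ρ : V → ℕ) : ∃ N, seg ρ N = Finset.univ := by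
  refine ⟨∑ v, ρ v + 1, ?_⟩
  ext v
  simp only [seg, Finset.mem_filter, Finset.mem_univ, true_and, iff_true]
  have := Finset.single_le_sum (f := ρ) (fun _ _ => Nat.zero_le _) (Finset.mem_univ v)
  omega

lemma greedy_sum_seg {V : Type*} [Fintype V] [DecidableEq V] (ρ : V → ℕ)
    (hρ : Function.Injective ρ) (g : Finset V → ℝ) (g0 : g ∅ = 0) (k : ℕ) :
    ∑ v ∈ seg ρ k, greedy ρ g v = g (seg ρ k) := by
  induction k with
  | zero => simp [seg, g0]
  | succ k ih =>
    rcases seg_step ρ hρ k with h | ⟨u, hu, hn, h⟩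
    · rw [h, ih]
    · rw [h, Finset.sum_insert hn, ih]
      simp only [greedy, hu, h]
      ring

lemma greedy_mem {V : Type*} [Fintype V] [DecidableEq V] (ρ : V → ℕ)
    (hρ : Function.Injective ρ) (g : Finset V → ℝ) (hg : Submodular g) (g0 : g ∅ = 0) :
    InBasePolytope g (greedy ρ g) := by
  obtain ⟨N, hN⟩ := seg_top ρ
  refine ⟨fun T => ?_, ?_⟩
  · have key : ∀ k, ∑ v ∈ T ∩ seg ρ k, greedy ρ g v ≤ g (T ∩ seg ρ k) := by
      intro k
      induction k with
      | zero => simp [seg, g0]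
      | succ k ih =>
        rcases seg_step ρ hρ k with h | ⟨u, hu, hn, h⟩
        · rw [h]; exact ih
        · by_cases hT : u ∈ T
          · have e1 : T ∩ insert u (seg ρ k) = insert u (T ∩ seg ρ k) :=
              Finset.inter_insert_of_mem hT
            have hs := hg (insert u (T ∩ seg ρ k)) (seg ρ k)
            have e2 : insert u (T ∩ seg ρ k) ∪ seg ρ k = insert u (seg ρ k) := by
              ext v; simp; tauto
            have e3 : insert u (T ∩ seg ρ k) ∩ seg ρ k = T ∩ seg ρ k := by
              ext v
              simp only [Finset.mem_inter, Finset.mem_insert]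
              constructor
              · rintro ⟨rfl | h, h'⟩
                · exact absurd h' hn
                · exact h
              · rintro ⟨h, h'⟩
                exact ⟨Or.inr ⟨h, h'⟩, h'⟩
            rw [e2, e3] at hs
            rw [h, e1, Finset.sum_insert (by simp [hn])]
            have : greedy ρ g u = g (insert u (seg ρ k)) - g (seg ρ k) := by
              simp only [greedy, hu, h]
            linarith
          · rw [h, Finset.inter_insert_of_notMem hT]; exact ih
    have := key N
    rwa [hN, Finset.inter_univ] at this
  · have := greedy_sum_seg ρ hρ g g0 N
    rwa [hN] at this

lemma greedy_opt {V : Type*} [Fintype V] [DecidableEq V] (ρ : V → ℕ)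
    (hρ : Function.Injective ρ) (g : Finset V → ℝ) (g0 : g ∅ = 0)
    (x : V → ℝ) (hx : ∀ u v, ρ u < ρ v → x u ≤ x v) (z : V → ℝ) (hz : InBasePolytope g z) :
    ∑ v, x v * greedy ρ g v ≤ ∑ v, x v * z v := by
  obtain ⟨N, hN⟩ := seg_top ρ
  have hd : ∀ k, 0 ≤ ∑ v ∈ seg ρ k, (greedy ρ g v - z v) := by
    intro k
    rw [Finset.sum_sub_distrib, greedy_sum_seg ρ hρ g g0]
    linarith [hz.1 (seg ρ k)]
  have key : ∀ k, ∀ c, (∀ v ∈ seg ρ k, x v ≤ c) →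
      ∑ v ∈ seg ρ k, x v * (greedy ρ g v - z v) ≤ c * ∑ v ∈ seg ρ k, (greedy ρ g v - z v) := by
    intro k
    induction k with
    | zero => intro c _; simp [seg]
    | succ k ih =>
      intro c hc
      have hdk := hd (k + 1)
      rcases seg_step ρ hρ k with h | ⟨u, hu, hn, h⟩
      · rw [h] at hc ⊢; exact ih c hc
      · rw [h] at hc hdk ⊢
        have h1 := ih (x u) (fun v hv => hx v u (by
          simp only [seg, Finset.mem_filter, Finset.mem_univ, true_and] at hv; omega))
        have h2 := mul_le_mul_of_nonneg_right (hc u (Finset.mem_insert_self _ _)) hdk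
        rw [Finset.sum_insert hn] at h2 ⊢
        rw [Finset.sum_insert hn]
        linarith
  have := key N (∑ v, |x v|) (fun v _ => (le_abs_self _).trans
    (Finset.single_le_sum (f := fun v => |x v|) (fun _ _ => abs_nonneg _) (Finset.mem_univ v)))
  rw [hN] at this
  have e : ∑ v, (greedy ρ g v - z v) = 0 := by
    rw [Finset.sum_sub_distrib, (hz.2), ← hN, greedy_sum_seg ρ hρ g g0]; simp
  rw [e] at this
  simp only [mul_sub, Finset.sum_sub_distrib] at this
  linarith

lemma exists_rank {V : Type*} [Fintype V] (x : V → ℝ) :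
    ∃ ρ : V → ℕ, Function.Injective ρ ∧ ∀ u v, ρ u < ρ v → x u ≤ x v := by
  let e := Fintype.equivFin V
  let σ := Tuple.sort (x ∘ e.symm)
  have hm : Monotone ((x ∘ e.symm) ∘ σ) := Tuple.monotone_sort _
  refine ⟨fun v => (σ.symm (e v) : ℕ), ?_, ?_⟩
  · intro u v h
    exact e.injective (σ.symm.injective (Fin.ext h))
  · intro u v h
    have := hm (a := σ.symm (e u)) (b := σ.symm (e v)) (Fin.le_def.2 (le_of_lt h))
    simpa using this

lemma decomp {V : Type*} [Fintype V] (r : ℕ) (hr : 0 < r) (a y : Fin r × V → ℝ)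
    (ha : ∀ v, ∑ i, a (i, v) = 0) :
    ∑ p, (a p - y p) ^ 2 = ∑ p : Fin r × V, (a p - (y p - (∑ i, y (i, p.2)) / (r : ℝ))) ^ 2
      + (∑ v, (∑ i, y (i, v)) ^ 2) / r := by
  have hr' : (r : ℝ) ≠ 0 := by positivity
  rw [Fintype.sum_prod_type_right, Fintype.sum_prod_type_right, Finset.sum_div,
    ← Finset.sum_add_distrib]
  refine Finset.sum_congr rfl fun v _ => ?_
  set s := ∑ i, y (i, v) with hs
  have e : ∀ i, (a (i, v) - (y (i, v) - s / r)) ^ 2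
      = (a (i, v) - y (i, v)) ^ 2 + 2 * (s / r) * (a (i, v) - y (i, v)) + (s / r) ^ 2 := by
    intro i; ring
  simp only [e, Finset.sum_add_distrib, ← Finset.mul_sum, Finset.sum_sub_distrib, ha v, ← hs,
    Finset.sum_const, Finset.card_univ, Fintype.card_fin, nsmul_eq_mul]
  field_simp
  ring

lemma base_sum_mem {V : Type*} [Fintype V] (r : ℕ) (f : Fin r → Finset V → ℝ)
    (y : Fin r × V → ℝ) (hy : ∀ i, InBasePolytope (f i) (fun v => y (i, v))) :
    InBasePolytope (fun S => ∑ i, f i S) (fun v => ∑ i, y (i, v)) := by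
  refine ⟨fun S => ?_, ?_⟩
  · rw [Finset.sum_comm]
    exact Finset.sum_le_sum fun i _ => (hy i).1 S
  · rw [Finset.sum_comm]
    exact Finset.sum_congr rfl fun i _ => (hy i).2

lemma convex_mem {V : Type*} [Fintype V] (g : Finset V → ℝ) (x q : V → ℝ)
    (hx : InBasePolytope g x) (hq : InBasePolytope g q) (t : ℝ) (h0 : 0 ≤ t) (h1 : t ≤ 1) :
    InBasePolytope g (fun v => (1 - t) * x v + t * q v) := by
  refine ⟨fun S => ?_, ?_⟩
  · rw [Finset.sum_add_distrib, ← Finset.mul_sum, ← Finset.mul_sum]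
    nlinarith [mul_le_mul_of_nonneg_left (hx.1 S) (sub_nonneg.2 h1),
      mul_le_mul_of_nonneg_left (hq.1 S) h0]
  · rw [Finset.sum_add_distrib, ← Finset.mul_sum, ← Finset.mul_sum, hx.2, hq.2]
    ring

lemma first_order (c D : ℝ) (hD : 0 ≤ D)
    (h : ∀ t : ℝ, 0 ≤ t → t ≤ 1 → 0 ≤ 2 * t * c + t ^ 2 * D) : 0 ≤ c := by
  by_contra hc
  push Not at hc
  have hp : 0 < D - c := by linarith
  have := h (-c / (D - c)) (div_nonneg (by linarith) hp.le) (by rw [div_le_one hp]; linarith)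
  have e : 2 * (-c / (D - c)) * c + (-c / (D - c)) ^ 2 * D
      = -(c ^ 2 * (D - 2 * c)) / (D - c) ^ 2 := by
    field_simp; ring
  rw [e] at this
  have h2 : -(c ^ 2 * (D - 2 * c)) / (D - c) ^ 2 < 0 := by
    apply div_neg_of_neg_of_pos _ (by positivity)
    have : 0 < c ^ 2 * (D - 2 * c) := mul_pos (by nlinarith) (by linarith)
    linarith
  linarith

/-- Lemma 3.1 for Best-Approx: `(a, y) ∈ 𝒜 × 𝒫` minimizes `‖a - y‖₂²`
iff `Ay = s*` and `a` is the orthogonal projection of `y` onto `𝒜`, namely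
`aᵢ = yᵢ - (Ay)/r` for each `i`. -/
theorem best_approx_optimal_iff
    {V : Type*} [Fintype V] [DecidableEq V] (r : ℕ) (hr : 0 < r)
    (f : Fin r → Finset V → ℝ)
    (hsub : ∀ i, Submodular (f i)) (h0 : ∀ i, f i ∅ = 0)
    (sstar : V → ℝ)
    (hsB : InBasePolytope (fun S => ∑ i, f i S) sstar)
    (hsMin : ∀ z : V → ℝ, InBasePolytope (fun S => ∑ i, f i S) z →
      ∑ v, sstar v ^ 2 ≤ ∑ v, z v ^ 2)
    (a y : Fin r × V → ℝ)
    (ha : ∀ v, ∑ i, a (i, v) = 0)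
    (hy : ∀ i, InBasePolytope (f i) (fun v => y (i, v))) :
    (∀ a' y' : Fin r × V → ℝ, (∀ v, ∑ i, a' (i, v) = 0) →
        (∀ i, InBasePolytope (f i) (fun v => y' (i, v))) →
        ∑ p, (a p - y p) ^ 2 ≤ ∑ p, (a' p - y' p) ^ 2)
      ↔ ((∀ v, ∑ i, y (i, v) = sstar v) ∧
          ∀ p : Fin r × V, a p = y p - (∑ i, y (i, p.2)) / (r : ℝ)) := by
  have hrp : (0 : ℝ) < r := by exact_mod_cast hr
  constructor
  · intro hopt
    have hproj : ∀ y' : Fin r × V → ℝ, (∀ i, InBasePolytope (f i) (fun v => y' (i, v))) →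
        ∑ p, (a p - y p) ^ 2 ≤ (∑ v, (∑ i, y' (i, v)) ^ 2) / r := by
      intro y' hy'
      have hA : ∀ v, ∑ i, (fun p : Fin r × V => y' p - (∑ i, y' (i, p.2)) / (r : ℝ)) (i, v)
          = 0 := by
        intro v
        simp only [Finset.sum_sub_distrib, Finset.sum_const, Finset.card_univ, Fintype.card_fin,
          nsmul_eq_mul]
        field_simp
        ring
      have h1 := hopt (fun p : Fin r × V => y' p - (∑ i, y' (i, p.2)) / (r : ℝ)) y' hA hy'
      rw [decomp r hr (fun p : Fin r × V => y' p - (∑ i, y' (i, p.2)) / (r : ℝ)) y' hA] at h1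
      simpa using h1
    have hdec := decomp r hr a y ha
    have hnn : 0 ≤ ∑ p : Fin r × V, (a p - (y p - (∑ i, y (i, p.2)) / (r : ℝ))) ^ 2 :=
      Finset.sum_nonneg fun _ _ => sq_nonneg _
    have hmin : ∀ y' : Fin r × V → ℝ, (∀ i, InBasePolytope (f i) (fun v => y' (i, v))) →
        ∑ v, (∑ i, y (i, v)) ^ 2 ≤ ∑ v, (∑ i, y' (i, v)) ^ 2 := by
      intro y' hy'
      have := hproj y' hy'
      have h2 : (∑ v, (∑ i, y (i, v)) ^ 2) / r ≤ (∑ v, (∑ i, y' (i, v)) ^ 2) / (r : ℝ) := by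
        linarith
      exact (div_le_div_iff_of_pos_right hrp).1 h2
    refine ⟨?_, ?_⟩
    · set x : V → ℝ := fun v => ∑ i, y (i, v) with hx
      obtain ⟨ρ, hρ, hmono⟩ := exists_rank x
      set F : Finset V → ℝ := fun S => ∑ i, f i S with hF
      have hF0 : F ∅ = 0 := by simp [hF, h0]
      set q : V → ℝ := greedy ρ F with hq
      have hqs : ∀ v, q v = ∑ i, greedy ρ (f i) v := by
        intro v; simp [hq, hF, greedy, Finset.sum_sub_distrib]
      have hxq : 0 ≤ ∑ v, x v * (q v - x v) := by
        apply first_order _ (∑ v, (q v - x v) ^ 2) (Finset.sum_nonneg fun _ _ => sq_nonneg _)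
        intro t ht0 ht1
        have h1 := hmin (fun p => (1 - t) * y p + t * greedy ρ (f p.1) p.2)
          (fun i => convex_mem (f i) _ _ (hy i) (greedy_mem ρ hρ (f i) (hsub i) (h0 i)) t ht0 ht1)
        have e : ∀ v, (∑ i, ((1 - t) * y (i, v) + t * greedy ρ (f i) v)) ^ 2
            = x v ^ 2 + (2 * t * (x v * (q v - x v)) + t ^ 2 * (q v - x v) ^ 2) := by
          intro v
          rw [Finset.sum_add_distrib, ← Finset.mul_sum, ← Finset.mul_sum, ← hqs v]
          change ((1 - t) * x v + t * q v) ^ 2 = _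
          ring
        simp only [e] at h1
        rw [Finset.sum_add_distrib, Finset.sum_add_distrib, ← Finset.mul_sum,
          ← Finset.mul_sum] at h1
        change ∑ v, x v ^ 2 ≤ _ at h1
        linarith
      have hqz := greedy_opt ρ hρ F hF0 x hmono sstar hsB
      have hle := hsMin x (base_sum_mem r f y hy)
      have hsq : ∑ v, (x v - sstar v) ^ 2 ≤ 0 := by
        have e : ∑ v, (x v - sstar v) ^ 2
            = ∑ v, x v ^ 2 - 2 * ∑ v, x v * sstar v + ∑ v, sstar v ^ 2 := by
          rw [Finset.mul_sum, ← Finset.sum_sub_distrib, ← Finset.sum_add_distrib]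
          exact Finset.sum_congr rfl fun v _ => by ring
        have e2 : ∑ v, x v * (q v - x v) = ∑ v, x v * q v - ∑ v, x v ^ 2 := by
          rw [← Finset.sum_sub_distrib]
          exact Finset.sum_congr rfl fun v _ => by ring
        linarith
      intro v
      have h3 := Finset.single_le_sum (f := fun v => (x v - sstar v) ^ 2)
        (fun _ _ => sq_nonneg _) (Finset.mem_univ v)
      have h4 : (x v - sstar v) ^ 2 = 0 := le_antisymm (h3.trans hsq) (sq_nonneg _)
      exact sub_eq_zero.1 (pow_eq_zero_iff (two_ne_zero) |>.1 h4)
    · intro p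
      have h1 := hproj y hy
      have h3 := Finset.single_le_sum
        (f := fun p : Fin r × V => (a p - (y p - (∑ i, y (i, p.2)) / (r : ℝ))) ^ 2)
        (fun _ _ => sq_nonneg _) (Finset.mem_univ p)
      have h4 : (a p - (y p - (∑ i, y (i, p.2)) / (r : ℝ))) ^ 2 = 0 :=
        le_antisymm (h3.trans (by linarith)) (sq_nonneg _)
      exact sub_eq_zero.1 (pow_eq_zero_iff (two_ne_zero) |>.1 h4)
  · rintro ⟨hs, hp⟩ a' y' ha' hy'
    rw [decomp r hr a y ha, decomp r hr a' y' ha']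
    have e : ∑ p : Fin r × V, (a p - (y p - (∑ i, y (i, p.2)) / (r : ℝ))) ^ 2 = 0 :=
      Finset.sum_eq_zero fun p _ => by rw [← hp p]; simp
    have hnn : 0 ≤ ∑ p : Fin r × V, (a' p - (y' p - (∑ i, y' (i, p.2)) / (r : ℝ))) ^ 2 :=
      Finset.sum_nonneg fun _ _ => sq_nonneg _
    have h1 := hsMin _ (base_sum_mem r f y' hy')
    rw [e]
    simp only [hs]
    have := div_le_div_of_nonneg_right h1 hrp.le
    linarith
end

section
/- Let g : 2^C → ℝ be submodular on a finite set C with g(∅) = 0, let x ∈ ℝ^C, and let u, v ∈ C be distinct. Define w ∈ ℝ^C by w(u) = −(g({u}) + 1), w(v) = −(g(C) − g(C \ {v}) − 1), and w(a) = −x(a) for a ∈ C \ {u, v}. Then every minimizer A of S ↦ g(S) + w(S) over subsets S ⊆ C satisfies u ∈ A and v ∉ A; consequently A is also a minimizer of S ↦ g(S) − x(S) over {S ⊆ C : u ∈ S, v ∉ S}, so min{g(S) − x(S) : S ⊆ C, u ∈ S, v ∉ S} can be computed from one minimization of g + w. -/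
open Finset

/-- Lemma 5.1: with the weight vector `w` as defined, every minimizer
`A` of `g + w` satisfies `u ∈ A`, `v ∉ A`, and hence minimizes `g - x` over
`{S : u ∈ S, v ∉ S}`. -/
theorem exchange_capacity_via_single_minimization
    {C : Type*} [Fintype C] [DecidableEq C]
    (g : Finset C → ℝ) (hsub : Submodular g) (h0 : g ∅ = 0)
    (x : C → ℝ) (u v : C) (huv : u ≠ v) (w : C → ℝ)
    (hwu : w u = -(g {u} + 1))
    (hwv : w v = -(g Finset.univ - g (Finset.univ.erase v) - 1))
    (hwa : ∀ a : C, a ≠ u → a ≠ v → w a = -x a)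
    (A : Finset C)
    (hA : ∀ S : Finset C, g A + ∑ a ∈ A, w a ≤ g S + ∑ a ∈ S, w a) :
    u ∈ A ∧ v ∉ A ∧
      ∀ S : Finset C, u ∈ S → v ∉ S →
        g A - ∑ a ∈ A, x a ≤ g S - ∑ a ∈ S, x a := by
  have hu : u ∈ A := by
    by_contra hu
    have h1 := hA (insert u A)
    rw [Finset.sum_insert hu, hwu] at h1
    have h2 := hsub A {u}
    have e1 : A ∪ {u} = insert u A := by ext a; simp [or_comm]
    have e2 : A ∩ {u} = ∅ := by
      ext a
      simp only [Finset.mem_inter, Finset.mem_singleton, Finset.notMem_empty, iff_false]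
      rintro ⟨h, rfl⟩
      exact hu h
    rw [e1, e2, h0] at h2
    linarith
  have hv : v ∉ A := by
    intro hv
    have h1 := hA (A.erase v)
    rw [← Finset.add_sum_erase A w hv, hwv] at h1
    have h2 := hsub A (Finset.univ.erase v)
    have e1 : A ∪ Finset.univ.erase v = Finset.univ := by
      ext a
      by_cases h : a = v
      · subst h; simp [hv]
      · simp [h]
    have e2 : A ∩ Finset.univ.erase v = A.erase v := by
      ext a; simp [and_comm]
    rw [e1, e2] at h2
    linarith
  have key : ∀ S : Finset C, u ∈ S → v ∉ S →
      ∑ a ∈ S, w a = w u + x u - ∑ a ∈ S, x a := by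
    intro S hS hvS
    rw [← Finset.add_sum_erase S w hS, ← Finset.add_sum_erase S x hS]
    have h : ∑ a ∈ S.erase u, w a = ∑ a ∈ S.erase u, -x a := by
      refine Finset.sum_congr rfl fun a ha => ?_
      rw [Finset.mem_erase] at ha
      exact hwa a ha.1 (fun h => hvS (h ▸ ha.2))
    rw [h, Finset.sum_neg_distrib]
    ring
  refine ⟨hu, hv, fun S hS hvS => ?_⟩
  have h := hA S
  rw [key A hu hv, key S hS hvS] at h
  linarith
end

section
/- Let f : 2^V → ℝ be submodular with f(∅) = 0, let x ∈ B(f), and let S ⊆ V be such that x(S) = f(S), every v with x(v) < 0 belongs to S, and no v with x(v) > 0 belongs to S. Then S is a minimizer of f, i.e., f(S) ≤ f(T) for every T ⊆ V. -/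
open Finset

/-- if `x ∈ B(f)`, `S` is tight for `x`, `S` contains all elements
with `x(v) < 0` and no element with `x(v) > 0`, then `S` minimizes `f`. -/
theorem tight_set_is_minimizer
    {V : Type*} [Fintype V] [DecidableEq V]
    (f : Finset V → ℝ) (hsub : Submodular f) (h0 : f ∅ = 0)
    (x : V → ℝ) (hx : InBasePolytope f x)
    (S : Finset V) (hSt : ∑ v ∈ S, x v = f S)
    (hneg : ∀ v : V, x v < 0 → v ∈ S)
    (hpos : ∀ v : V, 0 < x v → v ∉ S) :
    ∀ T : Finset V, f S ≤ f T := by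
  intro T
  have h1 : ∑ v ∈ S, x v ≤ ∑ v ∈ S ∩ T, x v := by
    rw [← Finset.sum_inter_add_sum_sdiff S T x]
    have : ∑ v ∈ S \ T, x v ≤ 0 := Finset.sum_nonpos fun v hv =>
      not_lt.1 fun h => hpos v h (Finset.mem_sdiff.1 hv).1
    linarith
  have h2 : ∑ v ∈ S ∩ T, x v ≤ ∑ v ∈ T, x v :=
    Finset.sum_le_sum_of_subset_of_nonneg Finset.inter_subset_right fun v hv hn =>
      not_lt.1 fun h => hn (Finset.mem_inter.2 ⟨hneg v h, hv⟩)
  linarith [hx.1 T]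
end

section
/- Let f : 2^V → ℝ be submodular with f(∅) = 0 and let s* be the unique minimizer of ‖s‖₂² over B(f). Then the set S⁻ = {v ∈ V : s*(v) < 0} is a minimizer of f (f(S⁻) ≤ f(T) for all T ⊆ V), and every minimizer T of f satisfies S⁻ ⊆ T; i.e., S⁻ is the unique smallest minimizer of f. -/
open Finset

theorem tight_union_inter_s15 {V : Type*} [Fintype V] [DecidableEq V]
    (f : Finset V → ℝ) (hsub : Submodular f) (s : V → ℝ)
    (hsB : InBasePolytope f s) (X Y : Finset V)
    (hX : ∑ v ∈ X, s v = f X) (hY : ∑ v ∈ Y, s v = f Y) :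
    ∑ v ∈ X ∪ Y, s v = f (X ∪ Y) ∧ ∑ v ∈ X ∩ Y, s v = f (X ∩ Y) := by
  have h1 := hsB.1 (X ∪ Y)
  have h2 := hsB.1 (X ∩ Y)
  have h3 := Finset.sum_union_inter (s₁ := X) (s₂ := Y) (f := s)
  have h4 := hsub X Y
  constructor <;> linarith

theorem exists_slack {V : Type*} (g : Finset V → ℝ) (F : Finset (Finset V)) :
    ∃ ε : ℝ, 0 < ε ∧ ∀ S ∈ F, 0 < g S → ε ≤ g S := by
  classical
  induction F using Finset.induction_on with
  | empty => exact ⟨1, one_pos, by simp⟩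
  | insert A F _ ih =>
    obtain ⟨ε, hε, h⟩ := ih
    by_cases hA : 0 < g A
    · refine ⟨min ε (g A), lt_min hε hA, ?_⟩
      intro S hS hg
      rcases Finset.mem_insert.1 hS with rfl | hS
      · exact min_le_right _ _
      · exact (min_le_left _ _).trans (h S hS hg)
    · refine ⟨ε, hε, ?_⟩
      intro S hS hg
      rcases Finset.mem_insert.1 hS with rfl | hS
      · exact absurd hg hA
      · exact h S hS hg

theorem exists_tight_sep {V : Type*} [Fintype V] [DecidableEq V]
    (f : Finset V → ℝ) (s : V → ℝ)
    (hsB : InBasePolytope f s)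
    (hsMin : ∀ z : V → ℝ, InBasePolytope f z → ∑ v, s v ^ 2 ≤ ∑ v, z v ^ 2)
    (u v : V) (huv : s u < s v) :
    ∃ T : Finset V, ∑ w ∈ T, s w = f T ∧ u ∈ T ∧ v ∉ T := by
  by_contra hcon
  push Not at hcon
  obtain ⟨ε₀, hε₀, hs⟩ := exists_slack (fun S => f S - ∑ w ∈ S, s w) Finset.univ
  obtain ⟨ε, hε, h1, h2⟩ : ∃ ε : ℝ, 0 < ε ∧ ε ≤ ε₀ ∧ ε < s v - s u :=
    ⟨min ε₀ ((s v - s u) / 2), lt_min hε₀ (by linarith), min_le_left _ _,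
      (min_le_right _ _).trans_lt (by linarith)⟩
  have hne : u ≠ v := by rintro rfl; exact lt_irrefl _ huv
  let z : V → ℝ := fun w => s w + (if w = u then ε else 0) - (if w = v then ε else 0)
  have hz : ∀ S : Finset V, ∑ w ∈ S, z w =
      ∑ w ∈ S, s w + (if u ∈ S then ε else 0) - (if v ∈ S then ε else 0) := by
    intro S
    simp [z, Finset.sum_add_distrib, Finset.sum_sub_distrib]
  have hzB : InBasePolytope f z := by
    constructor
    · intro S
      rw [hz]
      have hS := hsB.1 S
      by_cases hu : u ∈ S <;> by_cases hv : v ∈ S <;> simp only [hu, hv, if_true, if_false]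
      · linarith
      · have hlt : ∑ w ∈ S, s w ≠ f S := fun h => hv (hcon S h hu)
        have := hs S (Finset.mem_univ _) (sub_pos.2 (lt_of_le_of_ne hS hlt))
        linarith
      · linarith
      · linarith
    · rw [hz]
      simpa using hsB.2
  have hsq : ∑ w, z w ^ 2 = ∑ w, s w ^ 2 + (2 * ε * s u + ε ^ 2) + (ε ^ 2 - 2 * ε * s v) := by
    have : ∀ w, z w ^ 2 = s w ^ 2 + (if w = u then 2 * ε * s u + ε ^ 2 else 0)
        + (if w = v then ε ^ 2 - 2 * ε * s v else 0) := by
      intro w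
      by_cases hu : w = u
      · subst hu
        simp only [z, hne, if_true, if_false]
        ring
      · by_cases hv : w = v
        · subst hv
          simp only [z, hu, if_true, if_false]
          ring
        · simp only [z, hu, hv, if_false]
          ring
    simp_rw [this]
    simp [Finset.sum_add_distrib]
  have := hsMin z hzB
  rw [hsq] at this
  nlinarith [mul_pos hε (sub_pos.2 h2)]

theorem sneg_tight {V : Type*} [Fintype V] [DecidableEq V]
    (f : Finset V → ℝ) (hsub : Submodular f) (h0 : f ∅ = 0) (s : V → ℝ)
    (hsB : InBasePolytope f s)
    (hsMin : ∀ z : V → ℝ, InBasePolytope f z → ∑ v, s v ^ 2 ≤ ∑ v, z v ^ 2)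
    (N : Finset V) (hN : ∀ v : V, v ∈ N ↔ s v < 0) :
    ∑ v ∈ N, s v = f N := by
  have key : ∀ u ∈ N, ∀ A : Finset V, (∀ v ∈ A, v ∉ N) →
      ∃ T : Finset V, ∑ w ∈ T, s w = f T ∧ u ∈ T ∧ ∀ v ∈ A, v ∉ T := by
    intro u hu A
    induction A using Finset.induction_on with
    | empty => intro _; exact ⟨Finset.univ, hsB.2, Finset.mem_univ _, by simp⟩
    | insert a A _ ih =>
      intro hA
      obtain ⟨T, hT, huT, hTA⟩ := ih (fun v hv => hA v (Finset.mem_insert_of_mem hv))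
      have ha := hA a (Finset.mem_insert_self _ _)
      rw [hN, not_lt] at ha
      obtain ⟨U, hU, huU, haU⟩ := exists_tight_sep f s hsB hsMin u a
        (((hN u).1 hu).trans_le ha)
      refine ⟨T ∩ U, (tight_union_inter_s15 f hsub s hsB T U hT hU).2,
        Finset.mem_inter.2 ⟨huT, huU⟩, ?_⟩
      intro v hv hvT
      rw [Finset.mem_inter] at hvT
      rcases Finset.mem_insert.1 hv with rfl | hv
      · exact haU hvT.2
      · exact hTA v hv hvT.1
  have key2 : ∀ A : Finset V, A ⊆ N →
      ∃ T : Finset V, ∑ w ∈ T, s w = f T ∧ A ⊆ T ∧ T ⊆ N := by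
    intro A
    induction A using Finset.induction_on with
    | empty => intro _; exact ⟨∅, by simp [h0], by simp, by simp⟩
    | insert a A _ ih =>
      intro hA
      obtain ⟨ha, hA⟩ := Finset.insert_subset_iff.1 hA
      obtain ⟨T, hT, hAT, hTN⟩ := ih hA
      obtain ⟨U, hU, haU, hUN⟩ := key a ha Nᶜ (fun v hv => Finset.mem_compl.1 hv)
      refine ⟨T ∪ U, (tight_union_inter_s15 f hsub s hsB T U hT hU).1, ?_, ?_⟩
      · exact Finset.insert_subset (Finset.mem_union_right _ haU)
          (hAT.trans Finset.subset_union_left)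
      · refine Finset.union_subset hTN ?_
        intro v hv
        by_contra hvN
        exact hUN v (Finset.mem_compl.2 hvN) hv
  obtain ⟨T, hT, h1, h2⟩ := key2 N (Finset.Subset.refl _)
  rwa [Finset.Subset.antisymm h2 h1] at hT

/-- the negative-support `S⁻ = {v : s*(v) < 0}` of the min-norm point
`s*` of `B(f)` is the unique smallest minimizer of `f`. -/
theorem min_norm_point_gives_smallest_minimizer
    {V : Type*} [Fintype V] [DecidableEq V]
    (f : Finset V → ℝ) (hsub : Submodular f) (h0 : f ∅ = 0)
    (sstar : V → ℝ)
    (hsB : InBasePolytope f sstar)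
    (hsMin : ∀ z : V → ℝ, InBasePolytope f z →
      ∑ v, sstar v ^ 2 ≤ ∑ v, z v ^ 2)
    (Sneg : Finset V) (hSneg : ∀ v : V, v ∈ Sneg ↔ sstar v < 0) :
    (∀ T : Finset V, f Sneg ≤ f T) ∧
      ∀ T : Finset V, (∀ T' : Finset V, f T ≤ f T') → Sneg ⊆ T := by
  have ht := sneg_tight f hsub h0 sstar hsB hsMin Sneg hSneg
  have e : ∀ T : Finset V, ∑ v ∈ T, sstar v + ∑ v ∈ Sneg \ T, sstar v
      = ∑ v ∈ Sneg, sstar v + ∑ v ∈ T \ Sneg, sstar v := by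
    intro T
    have a := Finset.sum_inter_add_sum_sdiff T Sneg sstar
    have b := Finset.sum_inter_add_sum_sdiff Sneg T sstar
    rw [Finset.inter_comm] at b
    linarith
  have p : ∀ T : Finset V, 0 ≤ ∑ v ∈ T \ Sneg, sstar v := fun T =>
    Finset.sum_nonneg fun v hv => by
      have := (Finset.mem_sdiff.1 hv).2
      rwa [hSneg, not_lt] at this
  have n : ∀ T : Finset V, ∀ v ∈ Sneg \ T, sstar v < 0 := fun T v hv =>
    (hSneg v).1 (Finset.mem_sdiff.1 hv).1
  constructor
  · intro T
    have := Finset.sum_nonpos fun v hv => (n T v hv).le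
    linarith [e T, p T, hsB.1 T]
  · intro T hT
    by_contra hc
    have hne : (Sneg \ T).Nonempty := Finset.sdiff_nonempty.2 hc
    have := Finset.sum_neg (n T) hne
    linarith [e T, p T, hsB.1 T, hT Sneg]
end

section
/- Suppose κ > 0 is such that d(y, E) ≤ κ · d(y, 𝒜') for every y ∈ 𝒫 \ E. Then for every y ∈ 𝒫, letting y* be a point of E closest to y, one has ‖A(y − y*)‖₂² ≥ (r / κ²) · ‖y − y*‖₂²; i.e., the objective of (Prox-DSFM) is restricted ℓ-strongly convex with ℓ = r/κ², so ℓ* ≥ r/κ*². -/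
open Finset

/-- if `d(y, E) ≤ κ · d(y, 𝒜')` for all `y ∈ 𝒫 \ E`, then the
(Prox-DSFM) objective is restricted `r/κ²`-strongly convex: for every `y ∈ 𝒫` and
closest point `y* ∈ E`, `‖A(y - y*)‖₂² ≥ (r/κ²) ‖y - y*‖₂²`. -/
theorem ell_star_from_kappa
    {V : Type*} [Fintype V] [DecidableEq V] (r : ℕ)
    (f : Fin r → Finset V → ℝ)
    (hsub : ∀ i, Submodular (f i)) (h0 : ∀ i, f i ∅ = 0)
    (sstar : V → ℝ)
    (hsB : InBasePolytope (fun S => ∑ i, f i S) sstar)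
    (hsMin : ∀ z : V → ℝ, InBasePolytope (fun S => ∑ i, f i S) z →
      ∑ v, sstar v ^ 2 ≤ ∑ v, z v ^ 2)
    (P A' E : Set (Fin r × V → ℝ))
    (hP : P = {y | ∀ i, InBasePolytope (f i) (fun v => y (i, v))})
    (hA' : A' = {a | ∀ v, ∑ i, a (i, v) = sstar v})
    (hE : E = {y ∈ P | ∀ v, ∑ i, y (i, v) = sstar v})
    (κ : ℝ) (hκ : 0 < κ)
    (hkb : ∀ y ∈ P \ E, distSet y E ≤ κ * distSet y A') :
    ∀ y ∈ P, ∀ ystar ∈ E, (∀ z ∈ E, norm2 (y - ystar) ≤ norm2 (y - z)) →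
      ∑ v, ((∑ i, y (i, v)) - ∑ i, ystar (i, v)) ^ 2 ≥
        ((r : ℝ) / κ ^ 2) * ∑ p, (y p - ystar p) ^ 2 := by
  intro y hy ystar hys hmin
  have hLnn : 0 ≤ ∑ v, ((∑ i, y (i, v)) - ∑ i, ystar (i, v)) ^ 2 :=
    Finset.sum_nonneg fun _ _ => sq_nonneg _
  have hDnn : 0 ≤ ∑ p, (y p - ystar p) ^ 2 :=
    Finset.sum_nonneg fun _ _ => sq_nonneg _
  have hsq : norm2 (y - ystar) ^ 2 = ∑ p, (y p - ystar p) ^ 2 := by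
    unfold norm2
    exact Real.sq_sqrt hDnn
  have hnn : 0 ≤ norm2 (y - ystar) := Real.sqrt_nonneg _
  by_cases hyE : y ∈ E
  · have h1 := hmin y hyE
    have h2 : norm2 (y - y) = 0 := by simp [norm2]
    have h3 : norm2 (y - ystar) = 0 := by linarith
    rw [← hsq, h3]
    simpa using hLnn
  rcases Nat.eq_zero_or_pos r with hr | hr
  · have : (r : ℝ) = 0 := by exact_mod_cast hr
    rw [this]
    simpa using hLnn
  have hrR : (0 : ℝ) < r := by exact_mod_cast hr
  have hAs : ∀ v, ∑ i, ystar (i, v) = sstar v := by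
    rw [hE] at hys
    exact hys.2
  have hk := hkb y ⟨hy, hyE⟩
  have hlow : norm2 (y - ystar) ≤ distSet y E := by
    unfold distSet
    apply le_csInf
    · exact ⟨_, ystar, hys, rfl⟩
    · rintro _ ⟨z, hz, rfl⟩
      exact hmin z hz
  set a : Fin r × V → ℝ := fun p => y p - ((∑ i, y (i, p.2)) - ∑ i, ystar (i, p.2)) / r with ha
  have haA : a ∈ A' := by
    rw [hA']
    intro v
    simp only [ha, Finset.sum_sub_distrib, Finset.sum_const, Finset.card_univ, Fintype.card_fin,
      nsmul_eq_mul]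
    rw [← hAs v]
    field_simp
    ring
  have hup : distSet y A' ≤ norm2 (y - a) := by
    unfold distSet
    apply csInf_le
    · refine ⟨0, ?_⟩
      rintro _ ⟨z, _, rfl⟩
      exact Real.sqrt_nonneg _
    · exact ⟨a, haA, rfl⟩
  have hasq : r * norm2 (y - a) ^ 2 = ∑ v, ((∑ i, y (i, v)) - ∑ i, ystar (i, v)) ^ 2 := by
    unfold norm2
    rw [Real.sq_sqrt (Finset.sum_nonneg fun _ _ => sq_nonneg _), Fintype.sum_prod_type]
    simp only [ha, Pi.sub_apply, sub_sub_cancel, div_pow, Finset.sum_const, Finset.card_univ,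
      Fintype.card_fin, nsmul_eq_mul, ← Finset.sum_div]
    field_simp
  have hfin : norm2 (y - ystar) ≤ κ * norm2 (y - a) :=
    hlow.trans (hk.trans (mul_le_mul_of_nonneg_left hup hκ.le))
  have hfin2 : norm2 (y - ystar) ^ 2 ≤ κ ^ 2 * norm2 (y - a) ^ 2 := by
    rw [← mul_pow]
    exact pow_le_pow_left₀ hnn hfin 2
  rw [← hsq, ← hasq, ge_iff_le, div_mul_eq_mul_div, div_le_iff₀ (by positivity)]
  calc (r : ℝ) * norm2 (y - ystar) ^ 2 ≤ r * (κ ^ 2 * norm2 (y - a) ^ 2) :=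
        mul_le_mul_of_nonneg_left hfin2 hrR.le
    _ = r * norm2 (y - a) ^ 2 * κ ^ 2 := by ring
end
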